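/- arXiv:0810.0966 — 3 statements merged into one kernel-verified Lean document; each statement's English description precedes it below -/
import Mathlib

section
/- If a rooted tree T₀ has minimal first Dirichlet eigenvalue among all rooted trees with a given degree sequence, then T₀ is a caterpillar in which at most one neighbor of the root is not a pendant vertex. -/
open Matrix BigOperators
open scoped Classical

/-- Weighted Laplacian of a weight function. -/
noncomputable def wLap {V : Type*} [Fintype V] [DecidableEq V] (w : V → V → ℝ) : Matrix V V ℝ :=
  Matrix.diagonal (fun v => ∑ u, w v u) - Matrix.of w

/-- The `k`-th smallest eigenvalue of a real matrix (0 if not Hermitian / out of range). -/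
noncomputable def kthEig {W : Type*} [Fintype W] [DecidableEq W] (A : Matrix W W ℝ) (k : ℕ) : ℝ :=
  if hA : A.IsHermitian then
    if h : k < Fintype.card W then
      (let g : Fin (Fintype.card W) → ℝ := hA.eigenvalues ∘ (Fintype.equivFin W).symm
       (g ∘ Tuple.sort g) ⟨k, h⟩)
    else 0
  else 0

noncomputable def minEig {W : Type*} [Fintype W] [DecidableEq W] (A : Matrix W W ℝ) : ℝ := kthEig A 0

/-- algebraic connectivity of a simple graph -/
noncomputable def algConn {V : Type*} [Fintype V] [DecidableEq V] (G : SimpleGraph V) : ℝ :=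
  kthEig (G.lapMatrix ℝ) 1

/-- Dirichlet matrix: weighted Laplacian restricted to an interior set `S`. -/
noncomputable def dirichletMatrix {V : Type*} [Fintype V] [DecidableEq V]
    (w : V → V → ℝ) (S : Set V) : Matrix S S ℝ :=
  (wLap w).submatrix Subtype.val Subtype.val

noncomputable def degSeq {V : Type*} [Fintype V] [DecidableEq V] (G : SimpleGraph V) : Multiset ℕ :=
  Finset.univ.val.map (fun v => G.degree v)

/-- Edge weights of a rooted tree: every edge has weight 1 except the
boundary edge from the root `v₀` to the distinguished neighbor `x`,
which has weight `w₀`. -/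
noncomputable def treeWeight {V : Type*} [Fintype V] [DecidableEq V]
    (T : SimpleGraph V) (v₀ x : V) (w₀ : ℝ) : V → V → ℝ :=
  fun u v => if T.Adj u v then
    (if (u = v₀ ∧ v = x) ∨ (u = x ∧ v = v₀) then w₀ else 1) else 0

/-- First Dirichlet eigenvalue of a rooted tree (root = unique boundary vertex). -/
noncomputable def nuRooted {V : Type*} [Fintype V] [DecidableEq V]
    (T : SimpleGraph V) (v₀ x : V) (w₀ : ℝ) : ℝ :=
  minEig (dirichletMatrix (treeWeight T v₀ x w₀) ({v₀}ᶜ : Set V))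

/-- A caterpillar: the non-pendant vertices can be arranged as a path. -/
noncomputable def IsCaterpillar {V : Type*} [Fintype V] [DecidableEq V]
    (T : SimpleGraph V) : Prop :=
  ∃ P : List V, P.Nodup ∧ (∀ v, v ∈ P ↔ 1 < T.degree v) ∧ P.Chain' T.Adj

/-!
Let `f ≥ 0` be a first Dirichlet eigenfunction of the tree `T`, and root `T` at `v₀`. The eigenvalue
equation shows that `f` grows along paths leading away from the root, strictly where it is positive
(`eigenfunction_mono`), so that no vertex with a child maximizes `f`. Let `l` be a maximum point of
`f`; it is a leaf.

Suppose some non-pendant vertex `b ≠ v₀` is not on the path from `v₀` to `l`. Then `f b < f l`.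
Moving all children of `b`, with their subtrees, to `l` exchanges the degrees of `b` and `l`, so the
degree sequence is unchanged. Adding the constant `f l - f b > 0` to `f` on the moved subtrees gives
a test function on the new tree with the same energy and a larger norm (`shift_children`), hence a
smaller eigenvalue. So in a minimal tree all non-pendant vertices other than the root lie on the path
from `v₀` to `l`, which gives both claims (`caterpillar_of_ancestors`).

Rooted trees are handled through parent functions (`parGraph`), for which moving the children of `b`
to `l` just replaces the value `b` by `l`.
-/

/-! ### The first Dirichlet eigenvalue -/

/-- `minEig A` is an eigenvalue of the symmetric matrix `A` and bounds
its quadratic form below on unit vectors. -/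
theorem minEig_spec {W : Type*} [Fintype W] [DecidableEq W] [Nonempty W] (A : Matrix W W ℝ)
    (hA : A.IsHermitian) :
    (A - minEig A • (1 : Matrix W W ℝ)).PosSemidef ∧ ∃ y : W → ℝ, y ≠ 0 ∧ A *ᵥ y = minEig A • y := by
  have hcard : 0 < Fintype.card W := Fintype.card_pos
  set e := Fintype.equivFin W with he
  set g : Fin (Fintype.card W) → ℝ := hA.eigenvalues ∘ e.symm with hg
  have hmin : minEig A = g (Tuple.sort g ⟨0, hcard⟩) := by
    simp only [minEig, kthEig, hA, hcard, dif_pos]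
    rfl
  have hle : ∀ i, minEig A ≤ hA.eigenvalues i := by
    intro i
    have h1 := Tuple.monotone_sort g
      (show (⟨0, hcard⟩ : Fin (Fintype.card W)) ≤ (Tuple.sort g).symm (e i) from Nat.zero_le _)
    rw [hmin]
    simpa [hg] using h1
  constructor
  · have hB : (A - minEig A • (1 : Matrix W W ℝ)).IsHermitian := by
      refine hA.sub ?_
      simp [Matrix.IsHermitian]
    rw [hB.posSemidef_iff_eigenvalues_nonneg]
    intro i
    obtain ⟨c, hc⟩ : ∃ c, c = hB.eigenvalues i := ⟨_, rfl⟩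
    have h1 : c ∈ spectrum ℝ (A - minEig A • (1 : Matrix W W ℝ)) := by
      rw [hB.spectrum_real_eq_range_eigenvalues]; exact ⟨i, hc.symm⟩
    rw [← hc]
    rw [← Algebra.algebraMap_eq_smul_one, ← spectrum.sub_singleton_eq,
      hA.spectrum_real_eq_range_eigenvalues] at h1
    obtain ⟨_, ⟨j, rfl⟩, _, rfl, h2⟩ := h1
    have := hle j
    simp only [Pi.zero_apply] at h2 ⊢
    linarith
  · refine ⟨hA.eigenvectorBasis (e.symm (Tuple.sort g ⟨0, hcard⟩)), ?_, ?_⟩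
    · intro h
      apply hA.eigenvectorBasis.orthonormal.ne_zero (e.symm (Tuple.sort g ⟨0, hcard⟩))
      ext i
      exact congrFun h i
    · rw [hA.mulVec_eigenvectorBasis, hmin]
      rfl

/-- The weighted Laplacian as an operator on functions on all vertices. -/
noncomputable def lapOp {V : Type*} [Fintype V] (w : V → V → ℝ) (g : V → ℝ) (v : V) : ℝ :=
  ∑ u, w v u * (g v - g u)

theorem sum_compl_singleton {V : Type*} [Fintype V] [DecidableEq V] (r : V) (F : V → ℝ)
    (hF : F r = 0) : ∑ u : ({r}ᶜ : Set V), F u = ∑ u, F u := by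
  rw [← Finset.add_sum_erase _ _ (Finset.mem_univ r), hF, zero_add]
  exact (Finset.sum_subtype (Finset.univ.erase r) (by simp) F).symm

theorem dirichletMatrix_mulVec {V : Type*} [Fintype V] [DecidableEq V] (w : V → V → ℝ) (r : V)
    (g : V → ℝ) (hg : g r = 0) (v : ({r}ᶜ : Set V)) :
    (dirichletMatrix w {r}ᶜ *ᵥ (fun u => g u)) v = lapOp w g v := by
  have : (dirichletMatrix w {r}ᶜ *ᵥ (fun u => g u)) v
      = ∑ u : ({r}ᶜ : Set V), (fun u => wLap w v u * g u) u := rfl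
  refine this.trans ((sum_compl_singleton r (fun u => wLap w v u * g u) (by simp [hg])).trans ?_)
  simp [wLap, lapOp, Matrix.diagonal_apply, mul_sub, sub_mul, Finset.sum_sub_distrib, Finset.sum_mul]

/-- The variational characterization of the first Dirichlet eigenvalue, and the existence of a
nonnegative eigenfunction. The latter holds because replacing an eigenfunction by its absolute value
does not increase the energy, so that the absolute value is again a minimizer and hence an
eigenfunction. The vertex `x` only witnesses that there is an interior vertex. -/
theorem nonneg_eigenfunction {V : Type*} [Fintype V] [DecidableEq V] (w : V → V → ℝ)
    (hsymm : ∀ u v, w u v = w v u) (hw : ∀ u v, 0 ≤ w u v) (r x : V) (hxr : x ≠ r) :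
    (∀ g : V → ℝ, g r = 0 →
      minEig (dirichletMatrix w {r}ᶜ) * ∑ v, g v ^ 2 ≤ ∑ v, g v * lapOp w g v) ∧
    ∃ f : V → ℝ, f r = 0 ∧ (∀ v, 0 ≤ f v) ∧ f ≠ 0 ∧
      ∀ v, v ≠ r → lapOp w f v = minEig (dirichletMatrix w {r}ᶜ) * f v := by
  set A := dirichletMatrix w ({r}ᶜ : Set V) with hAdef
  have hA : A.IsHermitian := by
    ext i j
    simp only [hAdef, dirichletMatrix, wLap, Matrix.conjTranspose_apply, Matrix.submatrix_apply,
      Matrix.sub_apply, Matrix.diagonal_apply, Matrix.of_apply, star_trivial, hsymm j i]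
    by_cases h : (i : V) = j
    · simp [h]
    · simp [h, Ne.symm h]
  have : Nonempty ({r}ᶜ : Set V) := ⟨⟨x, hxr⟩⟩
  obtain ⟨hpsd, y, hy0, hy⟩ := minEig_spec A hA
  set ν := minEig A with hν
  have hquad : ∀ g : V → ℝ, g r = 0 →
      star (fun u : ({r}ᶜ : Set V) => g u) ⬝ᵥ ((A - ν • 1) *ᵥ (fun u : ({r}ᶜ : Set V) => g u))
        = ∑ v, g v * lapOp w g v - ν * ∑ v, g v ^ 2 := by
    intro g hg
    have h1 : star (fun u : ({r}ᶜ : Set V) => g u) ⬝ᵥ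
        ((A - ν • 1) *ᵥ (fun u : ({r}ᶜ : Set V) => g u))
        = ∑ v : ({r}ᶜ : Set V), (fun v => g v * (lapOp w g v - ν * g v)) v := by
      unfold dotProduct
      refine Finset.sum_congr rfl fun v _ => ?_
      simp [Matrix.sub_mulVec, Matrix.smul_mulVec, hAdef, dirichletMatrix_mulVec w r g hg]
    refine h1.trans ((sum_compl_singleton r (fun v => g v * (lapOp w g v - ν * g v))
      (by simp [hg])).trans ?_)
    rw [Finset.mul_sum, ← Finset.sum_sub_distrib]
    exact Finset.sum_congr rfl fun v _ => by ring
  have hlow : ∀ g : V → ℝ, g r = 0 → ν * ∑ v, g v ^ 2 ≤ ∑ v, g v * lapOp w g v := by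
    intro g hg
    have := hpsd.dotProduct_mulVec_nonneg (fun u : ({r}ᶜ : Set V) => g u)
    rw [hquad g hg] at this
    linarith
  refine ⟨hlow, ?_⟩
  -- extend the eigenvector by zero at the root
  set f₀ : V → ℝ := fun v => if h : v ≠ r then y ⟨v, h⟩ else 0 with hf₀
  have hf₀r : f₀ r = 0 := by simp [hf₀]
  have hf₀y : (fun u : ({r}ᶜ : Set V) => f₀ u) = y := by
    ext ⟨u, hu⟩
    have : u ≠ r := hu
    simp [hf₀, this]
  have heq : ∑ v, f₀ v * lapOp w f₀ v = ν * ∑ v, f₀ v ^ 2 := by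
    have := hquad f₀ hf₀r
    rw [hf₀y, Matrix.sub_mulVec, hy, Matrix.smul_mulVec, Matrix.one_mulVec, sub_self,
      dotProduct_zero] at this
    linarith
  -- the energy as a symmetric double sum, which makes its behavior under absolute values visible
  have hE : ∀ g : V → ℝ, ∑ v, g v * lapOp w g v = (∑ v, ∑ u, w v u * (g v - g u) ^ 2) / 2 := by
    intro g
    have h1 : ∑ v, g v * lapOp w g v = ∑ v, ∑ u, w v u * (g v - g u) * g v := by
      refine Finset.sum_congr rfl fun v _ => ?_
      rw [lapOp, Finset.mul_sum]
      exact Finset.sum_congr rfl fun u _ => by ring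
    have h2 : ∑ v, g v * lapOp w g v = ∑ v, ∑ u, w v u * (g u - g v) * g u := by
      rw [h1, Finset.sum_comm]
      exact Finset.sum_congr rfl fun u _ => Finset.sum_congr rfl fun v _ => by rw [hsymm]
    have h3 : (∑ v, ∑ u, w v u * (g v - g u) ^ 2)
        = ∑ v, ∑ u, w v u * (g v - g u) * g v + ∑ v, ∑ u, w v u * (g u - g v) * g u := by
      simp only [← Finset.sum_add_distrib]
      exact Finset.sum_congr rfl fun u _ => Finset.sum_congr rfl fun v _ => by ring
    rw [h3, ← h1, ← h2]; ring
  refine ⟨fun v => |f₀ v|, by simp [hf₀r], fun v => abs_nonneg _, ?_, ?_⟩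
  · intro h
    apply hy0
    rw [← hf₀y]
    ext u
    exact abs_eq_zero.1 (congrFun h u)
  · have hz : star (fun u : ({r}ᶜ : Set V) => |f₀ u|) ⬝ᵥ
        ((A - ν • 1) *ᵥ (fun u : ({r}ᶜ : Set V) => |f₀ u|)) = 0 := by
      refine le_antisymm ?_ (hpsd.dotProduct_mulVec_nonneg _)
      rw [hquad (fun v => |f₀ v|) (by simp [hf₀r])]
      have : ∑ v, |f₀ v| * lapOp w (fun v => |f₀ v|) v ≤ ∑ v, f₀ v * lapOp w f₀ v := by
        rw [hE, hE]
        gcongr ?_ / 2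
        refine Finset.sum_le_sum fun v _ => Finset.sum_le_sum fun u _ => ?_
        refine mul_le_mul_of_nonneg_left ?_ (hw v u)
        exact sq_le_sq.2 (abs_abs_sub_abs_le _ _)
      simp only [sq_abs]
      linarith
    rw [hpsd.dotProduct_mulVec_zero_iff] at hz
    intro v hv
    have := congrFun hz ⟨v, hv⟩
    rw [Matrix.sub_mulVec, Pi.sub_apply, hAdef,
      dirichletMatrix_mulVec w r (fun v => |f₀ v|) (by simp [hf₀r])] at this
    simp [Matrix.smul_mulVec] at this
    linarith

/-! ### Trees given by parent functions -/

/-- The graph joining every `v ≠ r` to `p v`; here `p` is thought of as the parent function of a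
tree with root `r`, and its value at `r` is irrelevant. Loops are discarded; that `p` really gives a
tree is expressed in the lemmas by a rank function decreasing along `p`. -/
def parGraph {V : Type*} (r : V) (p : V → V) : SimpleGraph V :=
  SimpleGraph.fromRel fun u v => u ≠ r ∧ p u = v

theorem parGraph_adj {V : Type*} {r : V} {p : V → V} {rk : V → ℕ}
    (h : ∀ v, v ≠ r → rk (p v) < rk v) (u v : V) :
    (parGraph r p).Adj u v ↔ (u ≠ r ∧ p u = v) ∨ (v ≠ r ∧ p v = u) := by
  rw [parGraph, SimpleGraph.fromRel_adj, and_iff_right_iff_imp]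
  rintro (⟨hu, rfl⟩ | ⟨hv, rfl⟩) heq
  · have := h u hu
    rw [← heq] at this
    exact lt_irrefl _ this
  · have := h v hv
    rw [heq] at this
    exact lt_irrefl _ this

theorem parGraph_connected {V : Type*} {r : V} {p : V → V} {rk : V → ℕ}
    (h : ∀ v, v ≠ r → rk (p v) < rk v) : (parGraph r p).Connected := by
  have key : ∀ n, ∀ v, rk v = n → (parGraph r p).Reachable v r := by
    intro n
    induction n using Nat.strong_induction_on with
    | _ n ih =>
      intro v hv
      by_cases hvr : v = r
      · rw [hvr]
      · have h1 : (parGraph r p).Adj v (p v) := (parGraph_adj h _ _).2 (Or.inl ⟨hvr, rfl⟩)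
        exact h1.reachable.trans (ih _ (hv ▸ h v hvr) _ rfl)
  have : Nonempty V := ⟨r⟩
  exact ⟨fun u v => (key _ u rfl).trans (key _ v rfl).symm⟩

theorem parGraph_degree {V : Type*} [Fintype V] [DecidableEq V] {r : V} {p : V → V} {rk : V → ℕ}
    (h : ∀ v, v ≠ r → rk (p v) < rk v) (v : V) :
    (parGraph r p).degree v =
      (Finset.univ.filter fun u => u ≠ r ∧ p u = v).card + if v = r then 0 else 1 := by
  rw [← SimpleGraph.card_neighborFinset_eq_degree]
  by_cases hv : v = r
  · rw [if_pos hv, add_zero]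
    congr 1
    ext u
    simp only [SimpleGraph.mem_neighborFinset, parGraph_adj h, Finset.mem_filter, Finset.mem_univ,
      true_and]
    tauto
  · rw [if_neg hv, ← Finset.card_singleton (p v), ← Finset.card_union_of_disjoint]
    · congr 1
      ext u
      simp only [SimpleGraph.mem_neighborFinset, parGraph_adj h, Finset.mem_filter,
        Finset.mem_univ, true_and, Finset.mem_union, Finset.mem_singleton]
      constructor
      · rintro (h1 | h1)
        · exact Or.inr h1.2.symm
        · exact Or.inl h1
      · rintro (h1 | h1)
        · exact Or.inr h1
        · exact Or.inl ⟨hv, h1.symm⟩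
    · rw [Finset.disjoint_singleton_right, Finset.mem_filter]
      rintro ⟨_, h1, h2⟩
      have h3 := h v hv
      have h4 := h _ h1
      rw [h2] at h4
      exact lt_asymm h3 h4

/-- Every tree arises from a parent function: choose for each `v ≠ r` a neighbor nearer to `r`. -/
theorem exists_parent {V : Type*} (T : SimpleGraph V) (hT : T.IsTree) (r : V) :
    ∃ (p : V → V) (rk : V → ℕ), (∀ v, v ≠ r → rk (p v) + 1 = rk v) ∧ p r = r ∧ rk r = 0 ∧
      T = parGraph r p := by
  have hex : ∀ v, ∃ u, (v ≠ r → T.Adj v u ∧ T.dist u r + 1 = T.dist v r) ∧ (v = r → u = r) := by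
    intro v
    by_cases hv : v = r
    · exact ⟨r, fun h => absurd hv h, fun _ => rfl⟩
    · obtain ⟨q, hq⟩ := hT.connected.exists_walk_length_eq_dist v r
      cases q with
      | nil => exact absurd rfl hv
      | @cons _ u _ hadj q' =>
        refine ⟨u, fun _ => ⟨hadj, ?_⟩, fun h => absurd h hv⟩
        have h1 : T.dist u r ≤ q'.length := SimpleGraph.dist_le q'
        have h2 : T.dist v r ≤ T.dist v u + T.dist u r := hT.connected.dist_triangle
        rw [SimpleGraph.dist_eq_one_iff_adj.2 hadj] at h2
        rw [SimpleGraph.Walk.length_cons] at hq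
        omega
  choose p hp using hex
  have hlt : ∀ v, v ≠ r → T.dist (p v) r < T.dist v r := fun v hv => by
    have := ((hp v).1 hv).2
    omega
  refine ⟨p, fun v => T.dist v r, fun v hv => ((hp v).1 hv).2, (hp r).2 rfl, by simp, ?_⟩
  have hle : parGraph r p ≤ T := by
    intro u v huv
    rcases (parGraph_adj (rk := fun v => T.dist v r) hlt u v).1 huv with ⟨h1, rfl⟩ | ⟨h1, rfl⟩
    · exact ((hp u).1 h1).1
    · exact ((hp v).1 h1).1.symm
  -- a tree is minimal among connected graphs
  exact le_antisymm ((SimpleGraph.isTree_iff_minimal_connected.1 hT).2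
    (parGraph_connected (rk := fun v => T.dist v r) hlt) hle) hle

/-- A connected graph with the degree sequence of a tree has as many edges as that tree. -/
theorem isTree_of_degSeq {V : Type*} [Fintype V] [DecidableEq V] {T T' : SimpleGraph V}
    (hT : T.IsTree) (hc : T'.Connected) (hd : degSeq T' = degSeq T) : T'.IsTree := by
  rw [SimpleGraph.isTree_iff_connected_and_card] at hT ⊢
  refine ⟨hc, ?_⟩
  rw [← hT.2]
  have h1 := congrArg Multiset.sum hd
  have h2 : ∀ G : SimpleGraph V, (degSeq G).sum = 2 * Nat.card G.edgeSet := by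
    intro G
    rw [Nat.card_eq_fintype_card, ← SimpleGraph.edgeFinset_card,
      ← SimpleGraph.sum_degrees_eq_twice_card_edges]
    rfl
  rw [h2, h2] at h1
  omega

/-- The weight of the edge joining `v` to its parent, where `x` is the child of the root carrying
the exceptional weight. -/
noncomputable def edgeWt {V : Type*} [DecidableEq V] (x : V) (w₀ : ℝ) (v : V) : ℝ :=
  if v = x then w₀ else 1

theorem edgeWt_pos {V : Type*} [DecidableEq V] (x : V) {w₀ : ℝ} (hw₀ : 1 ≤ w₀) (v : V) :
    0 < edgeWt x w₀ v := by
  unfold edgeWt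
  split_ifs <;> linarith

theorem treeWeight_parGraph {V : Type*} [Fintype V] [DecidableEq V] {r : V} {p : V → V}
    {rk : V → ℕ} (h : ∀ v, v ≠ r → rk (p v) < rk v) {x : V} (hx : p x = r) (hxr : x ≠ r)
    (w₀ : ℝ) (u v : V) :
    treeWeight (parGraph r p) r x w₀ u v =
      (if u ≠ r ∧ p u = v then edgeWt x w₀ u else 0)
        + if v ≠ r ∧ p v = u then edgeWt x w₀ v else 0 := by
  unfold treeWeight edgeWt
  by_cases h1 : u ≠ r ∧ p u = v
  · have h2 : ¬ (v ≠ r ∧ p v = u) := by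
      rintro ⟨h2, h3⟩
      have h4 := h u h1.1
      have h5 := h v h2
      rw [h1.2] at h4
      rw [h3] at h5
      exact lt_asymm h4 h5
    rw [if_pos ((parGraph_adj h u v).2 (Or.inl h1)), if_pos h1, if_neg h2, add_zero]
    refine if_congr ⟨?_, ?_⟩ rfl rfl
    · rintro (h3 | h3)
      · exact absurd h3.1 h1.1
      · exact h3.1
    · rintro rfl
      exact Or.inr ⟨rfl, h1.2.symm.trans hx⟩
  · by_cases h2 : v ≠ r ∧ p v = u
    · rw [if_pos ((parGraph_adj h u v).2 (Or.inr h2)), if_neg h1, if_pos h2, zero_add]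
      refine if_congr ⟨?_, ?_⟩ rfl rfl
      · rintro (h3 | h3)
        · exact h3.2
        · exact absurd h3.2 h2.1
      · rintro rfl
        exact Or.inl ⟨h2.2.symm.trans hx, rfl⟩
    · rw [if_neg (by rw [parGraph_adj h]; tauto), if_neg h1, if_neg h2, add_zero]

theorem lapOp_parGraph {V : Type*} [Fintype V] [DecidableEq V] {r : V} {p : V → V}
    {rk : V → ℕ} (h : ∀ v, v ≠ r → rk (p v) < rk v) {x : V} (hx : p x = r) (hxr : x ≠ r)
    (w₀ : ℝ) (f : V → ℝ) (v : V) :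
    lapOp (treeWeight (parGraph r p) r x w₀) f v =
      (if v ≠ r then edgeWt x w₀ v * (f v - f (p v)) else 0)
        + ∑ u, if u ≠ r ∧ p u = v then edgeWt x w₀ u * (f v - f u) else 0 := by
  unfold lapOp
  simp only [treeWeight_parGraph h hx hxr, add_mul, Finset.sum_add_distrib, ite_mul, zero_mul]
  congr 1
  by_cases hv : v = r <;> simp [hv]

/-- The Dirichlet energy as a sum over the edges, each indexed by its endpoint farther from the
root. -/
theorem energy_parGraph {V : Type*} [Fintype V] [DecidableEq V] {r : V} {p : V → V}
    {rk : V → ℕ} (h : ∀ v, v ≠ r → rk (p v) < rk v) {x : V} (hx : p x = r) (hxr : x ≠ r)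
    (w₀ : ℝ) (f : V → ℝ) :
    ∑ v, f v * lapOp (treeWeight (parGraph r p) r x w₀) f v =
      ∑ v, if v ≠ r then edgeWt x w₀ v * (f v - f (p v)) ^ 2 else 0 := by
  simp only [lapOp_parGraph h hx hxr, mul_add, Finset.sum_add_distrib, Finset.mul_sum]
  rw [Finset.sum_comm, ← Finset.sum_add_distrib]
  refine Finset.sum_congr rfl fun u _ => ?_
  by_cases hu : u = r
  · simp [hu]
  · simp only [ne_eq, hu, not_false_eq_true, if_true, true_and, mul_ite, mul_zero,
      Finset.sum_ite_eq, Finset.mem_univ]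
    ring

theorem treeWeight_symm {V : Type*} [Fintype V] [DecidableEq V] (T : SimpleGraph V) (r x : V) (w₀ : ℝ)
    (u v : V) : treeWeight T r x w₀ u v = treeWeight T r x w₀ v u := by
  unfold treeWeight
  rw [T.adj_comm]
  refine if_congr Iff.rfl (if_congr ?_ rfl rfl) rfl
  tauto

theorem treeWeight_nonneg {V : Type*} [Fintype V] [DecidableEq V] (T : SimpleGraph V) (r x : V) (w₀ : ℝ)
    (hw₀ : 1 ≤ w₀) (u v : V) : 0 ≤ treeWeight T r x w₀ u v := by
  unfold treeWeight
  split_ifs <;> linarith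

/-! ### Eigenfunctions on rooted trees and moving children -/

/-- A nonnegative eigenfunction grows along paths leading away from the root, strictly where it is
positive. Downward induction on the rank: once `f` does not decrease from `v` to its children, the
eigenvalue equation at `v` bounds `f v - f (p v)` below by a positive multiple of `f v`. -/
theorem eigenfunction_mono {V : Type*} [Fintype V] [DecidableEq V] {r : V} {p : V → V}
    {rk : V → ℕ} (h : ∀ v, v ≠ r → rk (p v) < rk v) {x : V} (hx : p x = r) (hxr : x ≠ r)
    {w₀ : ℝ} (hw₀ : 1 ≤ w₀) {f : V → ℝ} (hf : ∀ v, 0 ≤ f v) {ν : ℝ} (hν : 0 < ν)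
    (heig : ∀ v, v ≠ r → lapOp (treeWeight (parGraph r p) r x w₀) f v = ν * f v) :
    ∀ v, v ≠ r → f (p v) ≤ f v ∧ (0 < f v → f (p v) < f v) := by
  have hω := edgeWt_pos x hw₀
  have key : ∀ n, ∀ v, Finset.univ.sup rk - rk v = n → v ≠ r →
      f (p v) ≤ f v ∧ (0 < f v → f (p v) < f v) := by
    intro n
    induction n using Nat.strong_induction_on with
    | _ n ih =>
      intro v hn hv
      have h1 := heig v hv
      rw [lapOp_parGraph h hx hxr, if_pos hv] at h1
      have h2 : (∑ u, if u ≠ r ∧ p u = v then edgeWt x w₀ u * (f v - f u) else 0) ≤ 0 := by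
        refine Finset.sum_nonpos fun u _ => ?_
        split_ifs with hu
        · have h3 := h u hu.1
          have h4 : rk u ≤ Finset.univ.sup rk := Finset.le_sup (Finset.mem_univ u)
          rw [hu.2] at h3
          have h5 := (ih _ (by omega) u rfl hu.1).1
          rw [hu.2] at h5
          exact mul_nonpos_of_nonneg_of_nonpos (hω u).le (by linarith)
        · exact le_rfl
      have h6 : ν * f v ≤ edgeWt x w₀ v * (f v - f (p v)) := by linarith
      constructor
      · have h7 : 0 ≤ edgeWt x w₀ v * (f v - f (p v)) := (mul_nonneg hν.le (hf v)).trans h6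
        have := nonneg_of_mul_nonneg_right h7 (hω v)
        linarith
      · intro h8
        have h7 : 0 < edgeWt x w₀ v * (f v - f (p v)) := (mul_pos hν h8).trans_le h6
        have := (mul_pos_iff_of_pos_left (hω v)).1 h7
        linarith
  exact fun v hv => key _ v rfl hv

/-- The first Dirichlet eigenvalue is positive: a function of zero energy vanishing at the root
vanishes everywhere. -/
theorem eigenvalue_pos {V : Type*} [Fintype V] [DecidableEq V] {r : V} {p : V → V}
    {rk : V → ℕ} (h : ∀ v, v ≠ r → rk (p v) < rk v) {x : V} (hx : p x = r) (hxr : x ≠ r)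
    {w₀ : ℝ} (hw₀ : 1 ≤ w₀) {f : V → ℝ} (hfr : f r = 0) (hf0 : f ≠ 0) {ν : ℝ}
    (hE : ∑ v, f v * lapOp (treeWeight (parGraph r p) r x w₀) f v = ν * ∑ v, f v ^ 2) :
    0 < ν := by
  by_contra hν
  have hω := edgeWt_pos x hw₀
  have hnn : ∀ v ∈ Finset.univ,
      0 ≤ if v ≠ r then edgeWt x w₀ v * (f v - f (p v)) ^ 2 else 0 := by
    intro v _
    split_ifs
    · exact mul_nonneg (hω v).le (sq_nonneg _)
    · exact le_rfl
  have h1 : (∑ v, if v ≠ r then edgeWt x w₀ v * (f v - f (p v)) ^ 2 else 0) = 0 := by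
    refine le_antisymm ?_ (Finset.sum_nonneg hnn)
    rw [← energy_parGraph h hx hxr, hE]
    exact mul_nonpos_of_nonpos_of_nonneg (not_lt.1 hν) (Finset.sum_nonneg fun v _ => sq_nonneg _)
  rw [Finset.sum_eq_zero_iff_of_nonneg hnn] at h1
  have key : ∀ n, ∀ v, rk v = n → f v = 0 := by
    intro n
    induction n using Nat.strong_induction_on with
    | _ n ih =>
      intro v hn
      by_cases hv : v = r
      · rw [hv, hfr]
      · have h2 := h1 v (Finset.mem_univ v)
        rw [if_pos hv] at h2
        have h3 : f v - f (p v) = 0 := by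
          rcases mul_eq_zero.1 h2 with h3 | h3
          · exact absurd h3 (hω v).ne'
          · exact pow_eq_zero_iff (two_ne_zero) |>.1 h3
        have h4 := ih _ (hn ▸ h v hv) (p v) rfl
        linarith
  exact hf0 (funext fun v => key _ v rfl)

/-- Move all children of `b` to the leaf `l`, which is neither `b` nor below `b`. This exchanges the
degrees of `b` and `l`. Adding `f l - f b` to `f` on the proper descendants of `b` preserves the
energy and, as `b` has the child `c`, increases the norm. -/
theorem shift_children {V : Type*} [Fintype V] [DecidableEq V] {r : V} {p : V → V}
    {rk : V → ℕ} (h : ∀ v, v ≠ r → rk (p v) < rk v) (hpr : p r = r) {x : V} (hx : p x = r)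
    (hxr : x ≠ r) (w₀ : ℝ) {b l c : V} (hb : b ≠ r) (hl : l ≠ r) (hleaf : ∀ v, v ≠ r → p v ≠ l)
    (hcb : p c = b) (hanc : ∀ n, p^[n] l ≠ b) {f : V → ℝ} (hfr : f r = 0)
    (hf : ∀ v, 0 ≤ f v) (hbl : f b < f l) :
    ∃ (T' : SimpleGraph V) (g : V → ℝ), T'.Connected ∧ T'.Adj r x ∧
      degSeq T' = degSeq (parGraph r p) ∧ g r = 0 ∧ ∑ v, f v ^ 2 < ∑ v, g v ^ 2 ∧
      ∑ v, g v * lapOp (treeWeight T' r x w₀) g v =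
        ∑ v, f v * lapOp (treeWeight (parGraph r p) r x w₀) f v := by
  -- `W v`: the vertex `v` is `b` or a descendant of `b`
  set W : V → Prop := fun v => ∃ n, p^[n] v = b with hW
  have hWb : W b := ⟨0, rfl⟩
  have hWr : ¬ W r := by
    rintro ⟨n, hn⟩
    rw [Function.iterate_fixed hpr] at hn
    exact hb hn.symm
  have hWl : ¬ W l := by
    rintro ⟨n, hn⟩
    exact hanc n hn
  have hWp : ∀ v, W (p v) → W v := by
    rintro v ⟨n, hn⟩
    exact ⟨n + 1, hn⟩
  have hWup : ∀ v, W v → v ≠ b → W (p v) := by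
    rintro v ⟨n, hn⟩ hv
    cases n with
    | zero => exact absurd hn hv
    | succ n => exact ⟨n, hn⟩
  have hrkW : ∀ n v, rk (p^[n] v) ≤ rk v := by
    intro n
    induction n with
    | zero => exact fun v => le_rfl
    | succ n ih =>
      intro v
      rw [Function.iterate_succ_apply]
      refine (ih _).trans ?_
      by_cases hv : v = r
      · rw [hv, hpr]
      · exact (h v hv).le
  have hWpb : ¬ W (p b) := by
    rintro ⟨n, hn⟩
    have h1 := hrkW n (p b)
    rw [hn] at h1
    exact absurd (h b hb) (not_lt.2 h1)
  -- `D v`: the vertex `v` is a proper descendant of `b`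
  set D : V → Prop := fun v => v ≠ b ∧ W v with hD
  have hDiff : ∀ v, D v ↔ W (p v) := by
    intro v
    constructor
    · exact fun hv => hWup v hv.2 hv.1
    · intro hv
      refine ⟨?_, hWp v hv⟩
      rintro rfl
      exact hWpb hv
  have hDr : ¬ D r := fun hd => hWr hd.2
  have hDl : ¬ D l := fun hd => hWl hd.2
  -- the root needs no special case: `p r = r ≠ b`
  set p' : V → V := fun v => if p v = b then l else p v with hpdef
  -- moved vertices are ranked above `l`
  set rk' : V → ℕ := fun v => if D v then rk v + rk l + 1 else rk v with hrkdef
  have h' : ∀ v, v ≠ r → rk' (p' v) < rk' v := by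
    intro v hv
    have h1 := h v hv
    by_cases hd : D v
    · by_cases hpv : p v = b
      · simp only [hrkdef, hpdef, if_pos hd, if_pos hpv, if_neg hDl]
        omega
      · have hd' : D (p v) := ⟨hpv, (hDiff v).1 hd⟩
        simp only [hrkdef, hpdef, if_pos hd, if_neg hpv, if_pos hd']
        omega
    · have hpv : p v ≠ b := fun hpv => hd ((hDiff v).2 (hpv ▸ hWb))
      have hd' : ¬ D (p v) := fun hd' => hd ((hDiff v).2 hd'.2)
      simp only [hrkdef, hpdef, if_neg hd, if_neg hpv, if_neg hd']
      exact h1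
  have hx' : p' x = r := by
    simp only [hpdef, hx, if_neg hb.symm]
  have hdeg : ∀ v, (parGraph r p').degree v = (parGraph r p).degree (Equiv.swap b l v) := by
    intro v
    rw [parGraph_degree h', parGraph_degree h]
    congr 1
    · congr 1
      ext u
      simp only [Finset.mem_filter, Finset.mem_univ, true_and]
      refine and_congr_right fun hu => ?_
      have h1 : p' u = Equiv.swap b l (p u) := by
        by_cases hpu : p u = b
        · simp [hpdef, hpu]
        · simp [hpdef, hpu, Equiv.swap_apply_of_ne_of_ne hpu (hleaf u hu)]
      rw [h1, ← Equiv.swap_apply_eq_iff]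
    · refine if_congr ?_ rfl rfl
      rw [Equiv.swap_apply_eq_iff, Equiv.swap_apply_of_ne_of_ne hb.symm hl.symm]
  set g : V → ℝ := fun v => f v + if D v then f l - f b else 0 with hg
  refine ⟨parGraph r p', g, parGraph_connected h', ?_, ?_, ?_, ?_, ?_⟩
  · exact (parGraph_adj h' _ _).2 (Or.inr ⟨hxr, hx'⟩)
  · unfold degSeq
    have h1 : (Finset.univ : Finset V).val.map (Equiv.swap b l) = Finset.univ.val := by
      have := congrArg Finset.val (Finset.map_univ_equiv (Equiv.swap b l))
      simpa only [Finset.map_val, Equiv.coe_toEmbedding] using this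
    conv_rhs => rw [← h1, Multiset.map_map]
    exact Multiset.map_congr rfl fun v _ => hdeg v
  · simp [hg, hfr, hDr]
  · refine Finset.sum_lt_sum (fun v _ => ?_) ⟨c, Finset.mem_univ c, ?_⟩
    · have := hf v
      by_cases hd : D v
      · simp only [hg, if_pos hd]
        nlinarith
      · simp [hg, hd]
    · have := hf c
      have hd : D c := (hDiff c).2 (hcb ▸ hWb)
      simp only [hg, if_pos hd]
      nlinarith
  · rw [energy_parGraph h' hx' hxr, energy_parGraph h hx hxr]
    refine Finset.sum_congr rfl fun v _ => ?_
    by_cases hv : v = r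
    · simp [hv]
    · rw [if_pos hv, if_pos hv]
      have : g v - g (p' v) = f v - f (p v) := by
        by_cases hd : D v
        · by_cases hpv : p v = b
          · simp only [hg, hpdef, if_pos hd, if_pos hpv, if_neg hDl, hpv]
            ring
          · have hd' : D (p v) := ⟨hpv, (hDiff v).1 hd⟩
            simp only [hg, hpdef, if_pos hd, if_neg hpv, if_pos hd']
            ring
        · have hpv : p v ≠ b := fun hpv => hd ((hDiff v).2 (hpv ▸ hWb))
          have hd' : ¬ D (p v) := fun hd' => hd ((hDiff v).2 hd'.2)
          simp only [hg, hpdef, if_neg hd, if_neg hpv, if_neg hd']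
          ring
      rw [this]

/-- If all non-pendant vertices other than the root are ancestors of one leaf `l`, then the
proper ancestors of `l`, possibly without the root, form the spine of a caterpillar. -/
theorem caterpillar_of_ancestors {V : Type*} [Fintype V] [DecidableEq V] {r : V} {p : V → V}
    {rk : V → ℕ} (h : ∀ v, v ≠ r → rk (p v) + 1 = rk v) (hpr : p r = r) (hr : rk r = 0) {l : V}
    (hl : l ≠ r) (hl1 : (parGraph r p).degree l ≤ 1)
    (hanc : ∀ b, b ≠ r → 1 < (parGraph r p).degree b → ∃ n, p^[n] l = b) :
    IsCaterpillar (parGraph r p) ∧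
      {u : V | (parGraph r p).Adj r u ∧ 1 < (parGraph r p).degree u}.Subsingleton := by
  have hlt : ∀ v, v ≠ r → rk (p v) < rk v := fun v hv => by
    have := h v hv
    omega
  have hrk0 : ∀ v, rk v = 0 → v = r := by
    intro v hv
    by_contra hvr
    have := h v hvr
    omega
  -- truncated subtraction is intended: the iterates of `p` stay at the root
  have hrkn : ∀ n, rk (p^[n] l) = rk l - n := by
    intro n
    induction n with
    | zero => rfl
    | succ n ih =>
      rw [Function.iterate_succ_apply']
      by_cases hn : p^[n] l = r
      · rw [hn, hpr, hr]
        rw [hn, hr] at ih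
        omega
      · have := h _ hn
        omega
  have hlpos : 0 < rk l := Nat.pos_of_ne_zero fun h0 => hl (hrk0 l h0)
  constructor
  · obtain ⟨k, hk⟩ : ∃ k, k = if 1 < (parGraph r p).degree r then rk l else rk l - 1 := ⟨_, rfl⟩
    have hkle : k ≤ rk l ∧ rk l - 1 ≤ k := by
      split_ifs at hk <;> omega
    -- the root is the `rk l`-th ancestor of `l`; it belongs to the spine only if it is not pendant
    refine ⟨(List.range k).map fun i => p^[i + 1] l, ?_, ?_, ?_⟩
    · refine List.Nodup.map_on ?_ List.nodup_range
      intro i hi j hj hij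
      have h1 := congrArg rk hij
      rw [hrkn, hrkn] at h1
      rw [List.mem_range] at hi hj
      omega
    · intro v
      rw [List.mem_map]
      constructor
      · rintro ⟨i, hi, rfl⟩
        rw [List.mem_range] at hi
        by_cases hv : p^[i + 1] l = r
        · have h1 := hrkn (i + 1)
          rw [hv, hr] at h1
          rw [hv]
          by_contra hd
          rw [if_neg hd] at hk
          omega
        · rw [parGraph_degree hlt, if_neg hv]
          have h1 : 0 < (Finset.univ.filter fun u => u ≠ r ∧ p u = p^[i + 1] l).card := by
            refine Finset.card_pos.2 ⟨p^[i] l, ?_⟩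
            rw [Finset.mem_filter]
            refine ⟨Finset.mem_univ _, ?_, (Function.iterate_succ_apply' p i l).symm⟩
            intro h2
            apply hv
            rw [Function.iterate_succ_apply', h2, hpr]
          omega
      · intro hd
        by_cases hv : v = r
        · subst hv
          rw [if_pos hd] at hk
          refine ⟨rk l - 1, List.mem_range.2 (by omega), hrk0 _ ?_⟩
          rw [hrkn]
          omega
        · obtain ⟨n, hn⟩ := hanc v hv hd
          cases n with
          | zero =>
            rw [← hn] at hd
            exact absurd hd (not_lt.2 hl1)
          | succ n =>
            refine ⟨n, List.mem_range.2 ?_, hn⟩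
            have h1 := hrkn (n + 1)
            rw [hn] at h1
            have h2 : rk v ≠ 0 := fun h0 => hv (hrk0 v h0)
            omega
    · show List.IsChain _ _
      rw [List.isChain_iff_getElem]
      intro i hi
      simp only [List.length_map, List.length_range] at hi
      simp only [List.getElem_map, List.getElem_range]
      refine (parGraph_adj hlt _ _).2 (Or.inl ⟨?_, (Function.iterate_succ_apply' p (i + 1) l).symm⟩)
      intro h1
      have h2 := hrkn (i + 1)
      rw [h1, hr] at h2
      omega
  · have key : ∀ u, (parGraph r p).Adj r u → 1 < (parGraph r p).degree u →
        u = p^[rk l - 1] l := by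
      intro u hu hd
      obtain ⟨hur, hpu⟩ : u ≠ r ∧ p u = r := by
        rcases (parGraph_adj hlt _ _).1 hu with h1 | h1
        · exact absurd rfl h1.1
        · exact h1
      obtain ⟨n, hn⟩ := hanc u hur hd
      have h1 := h u hur
      rw [hpu, hr, ← hn, hrkn] at h1
      rw [← hn]
      congr 1
      have : n = rk l - 1 := by omega
      rw [this]
    rintro u ⟨hu1, hu2⟩ v ⟨hv1, hv2⟩
    rw [key u hu1 hu2, key v hv1 hv2]

/-- a rooted tree minimizing the first Dirichlet eigenvalue among
all rooted trees with the same degree sequence is a caterpillar in which at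
most one neighbor of the root is not a pendant vertex. -/
theorem min_dirichlet_is_caterpillar {V : Type*} [Fintype V] [DecidableEq V]
    (T : SimpleGraph V) (hT : T.IsTree) (v₀ x : V) (hx : T.Adj v₀ x)
    (w₀ : ℝ) (hw₀ : 1 ≤ w₀)
    (hmin : ∀ (T' : SimpleGraph V) (x' : V), T'.IsTree → T'.Adj v₀ x' →
      degSeq T' = degSeq T → nuRooted T v₀ x w₀ ≤ nuRooted T' v₀ x' w₀) :
    IsCaterpillar T ∧ {u : V | T.Adj v₀ u ∧ 1 < T.degree u}.Subsingleton := by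
  obtain ⟨p, rk, hrk, hpr, hr, rfl⟩ := exists_parent T hT v₀
  have hlt : ∀ v, v ≠ v₀ → rk (p v) < rk v := fun v hv => by
    have := hrk v hv
    omega
  obtain ⟨hxr, hpx⟩ : x ≠ v₀ ∧ p x = v₀ := by
    rcases (parGraph_adj hlt _ _).1 hx with h1 | h1
    · exact absurd rfl h1.1
    · exact h1
  obtain ⟨-, f, hfr, hf, hf0, heig⟩ := nonneg_eigenfunction (treeWeight (parGraph v₀ p) v₀ x w₀)
    (treeWeight_symm _ _ _ _) (treeWeight_nonneg _ _ _ _ hw₀) v₀ x hxr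
  change ∀ v, v ≠ v₀ → _ = nuRooted (parGraph v₀ p) v₀ x w₀ * _ at heig
  set ν := nuRooted (parGraph v₀ p) v₀ x w₀ with hν
  have hE : ∑ v, f v * lapOp (treeWeight (parGraph v₀ p) v₀ x w₀) f v = ν * ∑ v, f v ^ 2 := by
    rw [Finset.mul_sum]
    refine Finset.sum_congr rfl fun v _ => ?_
    by_cases hv : v = v₀
    · rw [hv, hfr]; ring
    · rw [heig v hv]; ring
  have hνpos : 0 < ν := eigenvalue_pos hlt hpx hxr hw₀ hfr hf0 hE
  have hmono := eigenfunction_mono hlt hpx hxr hw₀ hf hνpos heig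
  have : Nonempty V := ⟨v₀⟩
  obtain ⟨l, hlmax⟩ := Finite.exists_max f
  have hlpos : 0 < f l := by
    by_contra hneg
    apply hf0
    ext v
    exact le_antisymm ((hlmax v).trans (not_lt.1 hneg)) (hf v)
  have hl : l ≠ v₀ := by
    rintro rfl
    exact absurd hfr (ne_of_gt hlpos)
  -- no vertex with a child attains the maximum
  have hnomax : ∀ c, c ≠ v₀ → f (p c) < f l := by
    intro c hc
    rcases (hf c).eq_or_lt with h0 | h0
    · exact ((hmono c hc).1.trans h0.symm.le).trans_lt hlpos
    · exact ((hmono c hc).2 h0).trans_le (hlmax c)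
  have hleaf : ∀ v, v ≠ v₀ → p v ≠ l := by
    intro v hv h1
    have := hnomax v hv
    rw [h1] at this
    exact lt_irrefl _ this
  refine caterpillar_of_ancestors hrk hpr hr hl ?_ ?_
  · rw [parGraph_degree hlt, if_neg hl, Finset.filter_false_of_mem]
    · simp
    · rintro u - ⟨h1, h2⟩
      exact hleaf u h1 h2
  · intro b hb hd
    by_contra hanc
    push Not at hanc
    rw [parGraph_degree hlt, if_neg hb] at hd
    obtain ⟨c, hc⟩ := Finset.card_pos.1 (show
      0 < (Finset.univ.filter fun u => u ≠ v₀ ∧ p u = b).card by omega)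
    obtain ⟨-, hc, hcb⟩ := Finset.mem_filter.1 hc
    obtain ⟨T', g, hconn, hadj, hdeg, hgr, hnorm, henergy⟩ := shift_children hlt hpr hpx hxr w₀ hb
      hl hleaf hcb hanc hfr hf (hcb ▸ hnomax c hc)
    have h1 := hmin T' x (isTree_of_degSeq hT hconn hdeg) hadj hdeg
    have h2 := (nonneg_eigenfunction (treeWeight T' v₀ x w₀)
      (treeWeight_symm _ _ _ _) (treeWeight_nonneg _ _ _ _ hw₀) v₀ x hxr).1 g hgr
    change nuRooted T' v₀ x w₀ * _ ≤ _ at h2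
    rw [henergy, hE] at h2
    have h3 : 0 ≤ ∑ v, g v ^ 2 := Finset.sum_nonneg fun v _ => sq_nonneg _
    have h4 := mul_le_mul_of_nonneg_right h1 h3
    have h5 := mul_lt_mul_of_pos_left hnorm hνpos
    linarith
end

section
/- Let T be a tree whose Fiedler vector f has a characteristic edge e = uw (f(u) < 0 < f(w), all values nonzero). Subdivide e by inserting a new vertex v₀ and replacing e by edges uv₀ of weight |f(w)-f(u)|/|f(u)| and v₀w of weight |f(w)-f(u)|/|f(w)|. Then the resulting weighted tree T' has the same algebraic connectivity as T, and the extension of f by f(v₀) = 0 is a Fiedler vector of T' with characteristic vertex v₀. -/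
/-!
Write `λ = α(T)`, `p = |f u|`, `q = |f w|`, and let `L`, `L'` be the Laplacians of `T` and of the
subdivided tree. The zero extension of `f` is an eigenvector of `L'` for `λ` because the new
weights make the flow `f u - f w` through the old edge equal to the flow through each half.

`λ₂(L') ≤ λ`: both `0` (constants) and `λ > 0` are eigenvalues of `L'`.

`λ₂(L') ≥ λ`: by Courant-Fischer it is enough that `y ⬝ L' y ≥ λ |y|²` for all `y` vanishing at the
new vertex (`le_kthEig_one`). For such a `y`, extending `x : V → ℝ`, completing the square gives
`y ⬝ L' y = x ⬝ L x + (q x u + p x w)² / (p q) ≥ x ⬝ L x`, so the inequality holds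
when `x ⟂ 1`. To pass to arbitrary `x`, let `h` be the restriction of `f` to the component of `u`
in `T - uw`. It is a `λ`-eigenvector of the restriction of `L'` to `V`, and summing this eigenvalue
equation gives `λ ∑ h = f u - f w ≠ 0`. Hence `λ ≠ 0`, and some `x - c h` is orthogonal to `1`;
adding the eigenvector `c h` back changes `y ⬝ L' y - λ |y|²` by nothing. No sign pattern of `f`
beyond the edge `uw` is needed.
-/


open Matrix BigOperators
open scoped Classical

/-- Weights after subdividing the characteristic edge `uw` by a new vertex
(`none : Option V`). -/
noncomputable def subdivWeight {V : Type*} [Fintype V] [DecidableEq V]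
    (T : SimpleGraph V) (u w : V) (f : V → ℝ) : Option V → Option V → ℝ :=
  fun a c =>
    match a, c with
    | some a', some c' => if T.Adj a' c' ∧ s(a', c') ≠ s(u, w) then 1 else 0
    | some a', none =>
        if a' = u then |f w - f u| / |f u|
        else if a' = w then |f w - f u| / |f w| else 0
    | none, some c' =>
        if c' = u then |f w - f u| / |f u|
        else if c' = w then |f w - f u| / |f w| else 0
    | none, none => 0

/-! ### The second smallest eigenvalue -/

/-- `kthEig A 1` in terms of the unsorted eigenvalues: `i₀` carries the smallest one, `i₁` the
second smallest. -/
lemma kthEig_one_spec {W : Type*} [Fintype W] [DecidableEq W] {A : Matrix W W ℝ}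
    (hA : A.IsHermitian) (hc : 1 < Fintype.card W) :
    ∃ i₀ i₁ : W, i₀ ≠ i₁ ∧ hA.eigenvalues i₁ = kthEig A 1 ∧
      hA.eigenvalues i₀ ≤ kthEig A 1 ∧ ∀ i, i ≠ i₀ → kthEig A 1 ≤ hA.eigenvalues i := by
  set e := Fintype.equivFin W with he
  set g : Fin (Fintype.card W) → ℝ := hA.eigenvalues ∘ e.symm with hg
  have hk : kthEig A 1 = g (Tuple.sort g ⟨1, hc⟩) := by
    rw [kthEig, dif_pos hA, dif_pos hc]
    rfl
  have hmono := Tuple.monotone_sort g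
  refine ⟨e.symm (Tuple.sort g ⟨0, by omega⟩), e.symm (Tuple.sort g ⟨1, hc⟩), ?_, hk.symm, ?_, ?_⟩
  · intro h
    simpa using (Tuple.sort g).injective (e.symm.injective h)
  · rw [hk]
    exact hmono (a := ⟨0, by omega⟩) (b := ⟨1, hc⟩) (by simp [Fin.le_def])
  · intro i hi
    obtain ⟨j, rfl⟩ : ∃ j, e.symm (Tuple.sort g j) = i :=
      ⟨(Tuple.sort g).symm (e i), by simp⟩
    rw [hk]
    refine hmono (a := ⟨1, hc⟩) (b := j) ?_
    have : j ≠ ⟨0, by omega⟩ := fun h => hi (by rw [h])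
    rw [Fin.le_def]
    have : j.val ≠ 0 := fun h => this (Fin.ext h)
    simp only
    omega

/-- The spectral theorem for a real symmetric matrix, phrased with `⬝ᵥ`: orthonormality,
the eigenvalue equation, Parseval, and the diagonalised quadratic form. -/
lemma exists_eigenbasis {W : Type*} [Fintype W] [DecidableEq W] {A : Matrix W W ℝ}
    (hA : A.IsHermitian) :
    ∃ b : W → W → ℝ, (∀ i j, b i ⬝ᵥ b j = if i = j then 1 else 0) ∧
      (∀ i, A *ᵥ b i = hA.eigenvalues i • b i) ∧
      (∀ x y : W → ℝ, x ⬝ᵥ y = ∑ i, (b i ⬝ᵥ x) * (b i ⬝ᵥ y)) ∧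
      (∀ i (x : W → ℝ), b i ⬝ᵥ A *ᵥ x = hA.eigenvalues i * (b i ⬝ᵥ x)) ∧
      (∀ x : W → ℝ, x ⬝ᵥ A *ᵥ x = ∑ i, hA.eigenvalues i * (b i ⬝ᵥ x) ^ 2) := by
  have hsymm : ∀ x y : W → ℝ, x ⬝ᵥ A *ᵥ y = (A *ᵥ x) ⬝ᵥ y := by
    intro x y
    have : Aᵀ = A := by rw [← conjTranspose_eq_transpose_of_trivial, hA.eq]
    rw [dotProduct_mulVec, ← mulVec_transpose, this]
  let B := hA.eigenvectorBasis
  have hin : ∀ i j, inner ℝ (B i) (B j) = (B i : W → ℝ) ⬝ᵥ (B j : W → ℝ) := by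
    intro i j
    simp [PiLp.inner_apply, dotProduct, mul_comm]
  have hev : ∀ i, A *ᵥ (B i : W → ℝ) = hA.eigenvalues i • (B i : W → ℝ) :=
    fun i => hA.mulVec_eigenvectorBasis i
  have hpars : ∀ x y : W → ℝ,
      x ⬝ᵥ y = ∑ i, ((B i : W → ℝ) ⬝ᵥ x) * ((B i : W → ℝ) ⬝ᵥ y) := by
    intro x y
    have := B.sum_inner_mul_inner (WithLp.toLp 2 x) (WithLp.toLp 2 y)
    simp only [PiLp.inner_apply] at this
    simp only [dotProduct]
    simpa [mul_comm] using this.symm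
  have hadj : ∀ i (x : W → ℝ), (B i : W → ℝ) ⬝ᵥ A *ᵥ x =
      hA.eigenvalues i * ((B i : W → ℝ) ⬝ᵥ x) := by
    intro i x
    rw [hsymm, hev, smul_dotProduct, smul_eq_mul]
  refine ⟨fun i => B i, ?_, hev, hpars, hadj, ?_⟩
  · intro i j
    rw [← hin, orthonormal_iff_ite.mp B.orthonormal]
  · intro x
    rw [hpars]
    refine Finset.sum_congr rfl fun i _ => ?_
    rw [hadj]
    ring

/-- If the constants lie in the kernel and the second eigenvalue is positive, then the quadratic
form is bounded below by that eigenvalue on the orthogonal complement of the constants. -/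
lemma kthEig_one_mul_le {W : Type*} [Fintype W] [DecidableEq W] {A : Matrix W W ℝ}
    (hA : A.IsHermitian) (hc : 1 < Fintype.card W) (h1 : A *ᵥ 1 = 0) (hpos : 0 < kthEig A 1)
    (x : W → ℝ) (hx : 1 ⬝ᵥ x = 0) : kthEig A 1 * (x ⬝ᵥ x) ≤ x ⬝ᵥ A *ᵥ x := by
  obtain ⟨i₀, i₁, -, -, -, hall⟩ := kthEig_one_spec hA hc
  obtain ⟨b, -, -, hpars, hadj, hquad⟩ := exists_eigenbasis hA
  -- all eigencoordinates of `1` other than the one at `i₀` vanish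
  have hone : ∀ i, i ≠ i₀ → b i ⬝ᵥ (1 : W → ℝ) = 0 := by
    intro i hi
    have hs := hadj i 1
    rw [h1, dotProduct_zero] at hs
    have := hpos.trans_le (hall i hi)
    rcases mul_eq_zero.mp hs.symm with h | h
    · linarith
    · exact h
  have hsum : ∀ y : W → ℝ, 1 ⬝ᵥ y = (b i₀ ⬝ᵥ 1) * (b i₀ ⬝ᵥ y) := by
    intro y
    rw [hpars, Finset.sum_eq_single i₀]
    · intro i _ hi
      rw [hone i hi, zero_mul]
    · simp
  have hx0 : b i₀ ⬝ᵥ x = 0 := by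
    have h2 := hsum 1
    have h3 : (0 : ℝ) < (1 : W → ℝ) ⬝ᵥ 1 := by
      simp; omega
    rw [hsum x] at hx
    rcases mul_eq_zero.mp hx with h | h
    · rw [h] at h2; linarith
    · exact h
  rw [hpars x x, hquad, Finset.mul_sum]
  refine Finset.sum_le_sum fun i _ => ?_
  by_cases hi : i = i₀
  · simp [hi, hx0]
  · nlinarith [mul_le_mul_of_nonneg_right (hall i hi) (sq_nonneg (b i ⬝ᵥ x))]

/-- One half of Courant-Fischer for the second eigenvalue: a lower bound for the quadratic form on
the coordinate hyperplane `y p = 0` is a lower bound for the second eigenvalue. -/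
lemma le_kthEig_one {W : Type*} [Fintype W] [DecidableEq W] {A : Matrix W W ℝ}
    (hA : A.IsHermitian) (hc : 1 < Fintype.card W) (p : W) (l : ℝ)
    (h : ∀ y : W → ℝ, y p = 0 → l * (y ⬝ᵥ y) ≤ y ⬝ᵥ A *ᵥ y) : l ≤ kthEig A 1 := by
  obtain ⟨i₀, i₁, hne, hi1, hi0, -⟩ := kthEig_one_spec hA hc
  obtain ⟨b, horth, hev, -⟩ := exists_eigenbasis hA
  -- the form of `A` on the span of the two lowest eigenvectors
  have hform : ∀ s t : ℝ, s * b i₀ p + t * b i₁ p = 0 →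
      l * (s ^ 2 + t ^ 2) ≤ hA.eigenvalues i₀ * s ^ 2 + kthEig A 1 * t ^ 2 := by
    intro s t hst
    have := h (s • b i₀ + t • b i₁) (by simpa using hst)
    simp only [mulVec_add, mulVec_smul, hev, dotProduct_add, add_dotProduct, dotProduct_smul,
      smul_dotProduct, horth, hne, hne.symm, if_true, if_false, smul_eq_mul, hi1] at this
    nlinarith
  by_cases hz : b i₁ p = 0
  · simpa using hform 0 1 (by simp [hz])
  · have := hform (b i₁ p) (-b i₀ p) (by ring)
    have hp : 0 < b i₁ p ^ 2 + (-b i₀ p) ^ 2 := by positivity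
    refine le_of_mul_le_mul_right (this.trans ?_) hp
    nlinarith [mul_le_mul_of_nonneg_right hi0 (sq_nonneg (b i₁ p))]

/-- A bound `M ≥ l` on the orthogonal complement of the constants holds everywhere as soon as `M`
has an `l`-eigenvector that is not orthogonal to the constants. -/
lemma form_le_of_eigenvector {V : Type*} [Fintype V] {M : Matrix V V ℝ} {l : ℝ} (h : V → ℝ)
    (hsymm : Mᵀ = M) (hh : M *ᵥ h = l • h) (h1 : 1 ⬝ᵥ h ≠ 0)
    (hM : ∀ z : V → ℝ, 1 ⬝ᵥ z = 0 → l * (z ⬝ᵥ z) ≤ z ⬝ᵥ M *ᵥ z) (x : V → ℝ) :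
    l * (x ⬝ᵥ x) ≤ x ⬝ᵥ M *ᵥ x := by
  set c := (1 ⬝ᵥ x) / (1 ⬝ᵥ h) with hc
  have hz := hM (x - c • h) (by
    rw [dotProduct_sub, dotProduct_smul, smul_eq_mul, hc, div_mul_cancel₀ _ h1, sub_self])
  have hx : h ⬝ᵥ M *ᵥ x = l * (h ⬝ᵥ x) := by
    rw [dotProduct_mulVec, ← mulVec_transpose, hsymm, hh, smul_dotProduct, smul_eq_mul]
  simp only [mulVec_sub, mulVec_smul, hh, dotProduct_sub, sub_dotProduct, dotProduct_smul,
    smul_dotProduct, smul_eq_mul, hx, dotProduct_comm x h] at hz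
  linarith

/-! ### Weighted Laplacians and the subdivision -/

lemma wLap_mulVec {W : Type*} [Fintype W] [DecidableEq W] (k : W → W → ℝ) (y : W → ℝ) (a : W) :
    (wLap k *ᵥ y) a = ∑ b, k a b * (y a - y b) := by
  rw [wLap, sub_mulVec, Pi.sub_apply, mulVec_diagonal]
  simp [mulVec, dotProduct, mul_sub, Finset.sum_sub_distrib, Finset.sum_mul]

lemma lapMatrix_mulVec_eq_sum {V : Type*} [Fintype V] [DecidableEq V] (T : SimpleGraph V)
    (x : V → ℝ) (v : V) :
    (T.lapMatrix ℝ *ᵥ x) v = ∑ b, if T.Adj v b then x v - x b else 0 := by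
  rw [SimpleGraph.lapMatrix_mulVec_apply, ← Finset.sum_filter, Finset.sum_sub_distrib]
  simp [SimpleGraph.neighborFinset_eq_filter, ← SimpleGraph.card_neighborFinset_eq_degree]

lemma wLap_isHermitian {W : Type*} [Fintype W] [DecidableEq W] {k : W → W → ℝ}
    (hk : ∀ a b, k a b = k b a) : (wLap k).IsHermitian := by
  ext a b
  by_cases h : a = b
  · subst h; simp [wLap]
  · simp [wLap, h, Ne.symm h, hk a b]

lemma subdivWeight_symm {V : Type*} [Fintype V] [DecidableEq V] (T : SimpleGraph V) (u w : V)
    (f : V → ℝ) (a b : Option V) : subdivWeight T u w f a b = subdivWeight T u w f b a := by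
  rcases a with _ | a <;> rcases b with _ | b <;> simp [subdivWeight, T.adj_comm, Sym2.eq_swap]

/-- The part of the Laplacian coming from the edges other than `uw`. -/
noncomputable def restLap {V : Type*} [Fintype V] (T : SimpleGraph V) (u w : V)
    (x : V → ℝ) (v : V) : ℝ :=
  ∑ b, if T.Adj v b ∧ s(v, b) ≠ s(u, w) then x v - x b else 0

lemma wLap_subdiv_some {V : Type*} [Fintype V] [DecidableEq V] (T : SimpleGraph V) (u w : V)
    (f x : V → ℝ) (v : V) :
    (wLap (subdivWeight T u w f) *ᵥ (fun o => o.elim 0 x)) (some v) =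
      restLap T u w x v + (if v = u then |f w - f u| / |f u|
        else if v = w then |f w - f u| / |f w| else 0) * x v := by
  rw [wLap_mulVec, Fintype.sum_option, add_comm]
  simp [subdivWeight, restLap]

lemma wLap_subdiv_none {V : Type*} [Fintype V] [DecidableEq V] (T : SimpleGraph V) {u w : V}
    (huw : u ≠ w) (f x : V → ℝ) :
    (wLap (subdivWeight T u w f) *ᵥ (fun o => o.elim 0 x)) none =
      - (|f w - f u| / |f u| * x u + |f w - f u| / |f w| * x w) := by
  rw [wLap_mulVec, Fintype.sum_option]
  have : ∀ b, (if b = u then |f w - f u| / |f u|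
        else if b = w then |f w - f u| / |f w| else 0) * x b
      = (if b = u then |f w - f u| / |f u| * x b else 0)
        + (if b = w then |f w - f u| / |f w| * x b else 0) := by
    intro b
    by_cases h : b = u
    · subst h; simp [huw]
    · simp [h]
  simp [subdivWeight, this, Finset.sum_add_distrib]

lemma lapMatrix_eq_restLap {V : Type*} [Fintype V] [DecidableEq V] (T : SimpleGraph V) {u w : V}
    (huw : T.Adj u w) (x : V → ℝ) (v : V) :
    (T.lapMatrix ℝ *ᵥ x) v = restLap T u w x v +
      ((if v = u then x u - x w else 0) + (if v = w then x w - x u else 0)) := by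
  have hne := huw.ne
  have : ∀ b, (if T.Adj v b then x v - x b else 0) =
      (if T.Adj v b ∧ s(v, b) ≠ s(u, w) then x v - x b else 0) +
      ((if b = w then (if v = u then x u - x w else 0) else 0) +
        (if b = u then (if v = w then x w - x u else 0) else 0)) := by
    intro b
    have := huw.symm
    by_cases h1 : v = u <;> by_cases h2 : v = w <;> by_cases h3 : b = u <;>
      by_cases h4 : b = w <;> simp_all
  rw [lapMatrix_mulVec_eq_sum, restLap, Finset.sum_congr rfl fun b _ => this b,
    Finset.sum_add_distrib, Finset.sum_add_distrib]
  simp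

/-- The side of `u` after removing the bridge `uw`. -/
lemma exists_side {V : Type*} (T : SimpleGraph V) (hT : T.IsAcyclic) {u w : V}
    (huw : T.Adj u w) :
    ∃ S : Set V, u ∈ S ∧ w ∉ S ∧
      ∀ a b, T.Adj a b → s(a, b) ≠ s(u, w) → (a ∈ S ↔ b ∈ S) := by
  have hb := SimpleGraph.isAcyclic_iff_forall_adj_isBridge.mp hT huw
  rw [SimpleGraph.isBridge_iff] at hb
  refine ⟨{v | (T.deleteEdges {s(u, w)}).Reachable u v}, SimpleGraph.Reachable.refl _, hb, ?_⟩
  · intro a b hab hne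
    have h : (T.deleteEdges {s(u, w)}).Adj a b := by
      rw [SimpleGraph.deleteEdges_adj]; exact ⟨hab, hne⟩
    exact ⟨fun ha => ha.trans h.reachable, fun hb => hb.trans h.symm.reachable⟩

/-- subdividing the characteristic edge with the prescribed
weights preserves the algebraic connectivity, and the zero-extension of the
Fiedler vector is a Fiedler vector of the new tree with characteristic vertex
the new vertex. -/
theorem subdivide_characteristic_edge {V : Type*} [Fintype V] [DecidableEq V]
    (T : SimpleGraph V) (hT : T.IsTree)
    (f : V → ℝ) (hf : f ≠ 0)
    (heig : (T.lapMatrix ℝ) *ᵥ f = algConn T • f)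
    (hnz : ∀ v, f v ≠ 0)
    (u w : V) (huw : T.Adj u w) (hu : f u < 0) (hw : 0 < f w) :
    kthEig (wLap (subdivWeight T u w f)) 1 = algConn T ∧
    (wLap (subdivWeight T u w f)) *ᵥ (fun o => o.elim 0 f) =
      algConn T • (fun o : Option V => o.elim 0 f) ∧
    (fun o : Option V => o.elim 0 f) none = 0 ∧
    (∀ v : V, (fun o : Option V => o.elim 0 f) (some v) ≠ 0) := by
  set l := algConn T with hl
  set L' := wLap (subdivWeight T u w f) with hL'
  have hne : u ≠ w := huw.ne
  have hc : 1 < Fintype.card V := Fintype.one_lt_card_iff.mpr ⟨u, w, hne⟩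
  have hc' : 1 < Fintype.card (Option V) := by rw [Fintype.card_option]; omega
  have hH : L'.IsHermitian := wLap_isHermitian (subdivWeight_symm T u w f)
  have hT' : L'ᵀ = L' := by rw [← conjTranspose_eq_transpose_of_trivial, hH.eq]
  have h1' : L' *ᵥ 1 = 0 := by
    ext o; rw [hL', wLap_mulVec]; simp
  have h1 : T.lapMatrix ℝ *ᵥ 1 = 0 := by
    ext v; rw [lapMatrix_mulVec_eq_sum]; simp
  have hd : 0 < f w - f u := by linarith
  have hau : |f w - f u| / |f u| = (f w - f u) / (-f u) := by
    rw [abs_of_pos hd, abs_of_neg hu]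
  have haw : |f w - f u| / |f w| = (f w - f u) / f w := by
    rw [abs_of_pos hd, abs_of_pos hw]
  have hu0 : f u ≠ 0 := hu.ne
  have hw0 : f w ≠ 0 := hw.ne'
  have hflow_u : |f w - f u| / |f u| * f u = f u - f w := by
    rw [hau]; field_simp; ring
  have hflow_w : |f w - f u| / |f w| * f w = f w - f u := by
    rw [haw]; field_simp
  have hsome : ∀ v, (L' *ᵥ (fun o => o.elim 0 f)) (some v) = l * f v := by
    intro v
    have h := congrFun heig v
    rw [lapMatrix_eq_restLap T huw] at h
    rw [hL', wLap_subdiv_some]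
    simp only [Pi.smul_apply, smul_eq_mul] at h
    rw [← h]
    congr 1
    by_cases h1 : v = u
    · subst h1; simp [hne, hflow_u]
    · by_cases h2 : v = w
      · subst h2; simp [h1, hflow_w]
      · simp [h1, h2]
  have heig' : L' *ᵥ (fun o => o.elim 0 f) = l • (fun o : Option V => o.elim 0 f) := by
    ext o
    rcases o with _ | v
    · rw [hL', wLap_subdiv_none T hne, hflow_u, hflow_w]; simp
    · simpa using hsome v
  obtain ⟨S, huS, hwS, hS⟩ := exists_side T hT.2 huw
  -- the restriction of `f` to the side of `u`
  set h : V → ℝ := fun v => if v ∈ S then f v else 0 with hh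
  have hhsome : ∀ v, (L' *ᵥ (fun o => o.elim 0 h)) (some v) = l * h v := by
    intro v
    by_cases hv : v ∈ S
    · have hvw : v ≠ w := fun e => hwS (e ▸ hv)
      have hhv : h v = f v := by simp [hh, hv]
      rw [hhv, ← hsome, hL', wLap_subdiv_some, wLap_subdiv_some, hhv]
      congr 1
      refine Finset.sum_congr rfl fun b _ => ?_
      split_ifs with hb
      · have hbS := (hS v b hb.1 hb.2).mp hv
        simp [hh, hv, hbS]
      · rfl
    · have hvu : v ≠ u := fun e => hv (e ▸ huS)
      have hhv : h v = 0 := by simp [hh, hv]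
      rw [hL', wLap_subdiv_some, hhv, mul_zero, mul_zero, add_zero]
      refine Finset.sum_eq_zero fun b _ => ?_
      split_ifs with hb
      · have hbS := mt (hS v b hb.1 hb.2).mpr hv
        simp [hh, hv, hbS]
      · rfl
  -- the columns of `L'` sum to zero, so the eigenvalue equation for `h` sums to the flow at the new vertex
  have hsum : l * (1 ⬝ᵥ h) = f u - f w := by
    have h0 : (1 : Option V → ℝ) ⬝ᵥ L' *ᵥ (fun o => o.elim 0 h) = 0 := by
      rw [dotProduct_mulVec, ← mulVec_transpose, hT', h1', zero_dotProduct]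
    have hn : (L' *ᵥ (fun o => o.elim 0 h)) none = f w - f u := by
      rw [hL', wLap_subdiv_none T hne]
      have e1 : h u = f u := by simp [hh, huS]
      have e2 : h w = 0 := by simp [hh, hwS]
      rw [e1, e2, hflow_u]; ring
    rw [one_dotProduct, Fintype.sum_option, hn, Finset.sum_congr rfl fun v _ => hhsome v,
      ← Finset.mul_sum, ← one_dotProduct] at h0
    linarith
  have hl0 : l ≠ 0 := by
    rintro h0; rw [h0] at hsum; linarith
  have hh1 : 1 ⬝ᵥ h ≠ 0 := by
    intro h0; rw [h0] at hsum; linarith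
  have hff : 0 < f ⬝ᵥ f := by
    have := dotProduct_self_star_pos_iff.mpr hf
    simpa using this
  have hlpos : 0 < l := by
    refine lt_of_le_of_ne ?_ hl0.symm
    have := (T.posSemidef_lapMatrix ℝ).dotProduct_mulVec_nonneg f
    rw [heig] at this
    simp only [star_trivial, dotProduct_smul, smul_eq_mul] at this
    exact nonneg_of_mul_nonneg_left this hff
  have hext : ∀ x y : V → ℝ, (fun o : Option V => o.elim 0 x) ⬝ᵥ (fun o : Option V => o.elim 0 y)
      = x ⬝ᵥ y := by
    intro x y
    simp [dotProduct, Fintype.sum_option]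
  have hlow : l ≤ kthEig L' 1 := by
    refine le_kthEig_one hH hc' none l ?_
    -- the restriction of `L'` to the old vertices
    set M : Matrix V V ℝ := L'.submatrix some some with hM
    have hMv : ∀ (x : V → ℝ) v, (M *ᵥ x) v = (L' *ᵥ (fun o => o.elim 0 x)) (some v) := by
      intro x v
      simp [hM, mulVec, dotProduct, Fintype.sum_option]
    have hMsymm : Mᵀ = M := by rw [hM, transpose_submatrix, hT']
    have hMh : M *ᵥ h = l • h := by
      ext v; rw [hMv, hhsome]; simp
    have hML : ∀ z : V → ℝ, z ⬝ᵥ M *ᵥ z =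
        z ⬝ᵥ T.lapMatrix ℝ *ᵥ z + (f w * z u - f u * z w) ^ 2 / (f w * -f u) := by
      intro z
      have hpt : ∀ v, z v * (M *ᵥ z) v = z v * (T.lapMatrix ℝ *ᵥ z) v +
          ((if v = u then z v * (|f w - f u| / |f u| * z u - (z u - z w)) else 0) +
            (if v = w then z v * (|f w - f u| / |f w| * z w - (z w - z u)) else 0)) := by
        intro v
        rw [hMv, hL', wLap_subdiv_some, lapMatrix_eq_restLap T huw]
        by_cases h1 : v = u
        · subst h1; simp [hne]; ring
        · by_cases h2 : v = w
          · subst h2; simp [h1]; ring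
          · simp [h1, h2]
      rw [dotProduct, Finset.sum_congr rfl fun v _ => hpt v, Finset.sum_add_distrib,
        Finset.sum_add_distrib]
      simp only [Finset.sum_ite_eq', Finset.mem_univ, if_true, dotProduct]
      congr 1
      rw [hau, haw]
      field_simp
      ring
    have hform := form_le_of_eigenvector (l := l) h hMsymm hMh hh1 (by
      intro z hz
      have h2 := kthEig_one_mul_le (T.posSemidef_lapMatrix ℝ).1 hc h1 hlpos z hz
      have h3 : 0 ≤ (f w * z u - f u * z w) ^ 2 / (f w * -f u) :=
        div_nonneg (sq_nonneg _) (mul_nonneg hw.le (by linarith))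
      rw [hML]
      exact h2.trans (by linarith))
    intro y hy
    have hyx : y = fun o => o.elim 0 (fun v => y (some v)) := by
      ext o; rcases o with _ | v
      · exact hy
      · rfl
    have hx := hform (fun v => y (some v))
    have e1 : y ⬝ᵥ y = (fun v => y (some v)) ⬝ᵥ (fun v => y (some v)) := by
      simp [dotProduct, Fintype.sum_option, hy]
    have e2 : y ⬝ᵥ L' *ᵥ y =
        (fun v => y (some v)) ⬝ᵥ M *ᵥ (fun v => y (some v)) := by
      rw [dotProduct, Fintype.sum_option, hy, zero_mul, zero_add, dotProduct]
      refine Finset.sum_congr rfl fun v _ => ?_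
      rw [hMv, ← hyx]
    rw [e1, e2]
    exact hx
  refine ⟨le_antisymm ?_ hlow, heig', rfl, hnz⟩
  -- the extension of `f` is orthogonal to the constants, and its Rayleigh quotient is `l`
  have horth : (1 : Option V → ℝ) ⬝ᵥ (fun o : Option V => o.elim 0 f) = 0 := by
    have h0 : (1 : Option V → ℝ) ⬝ᵥ L' *ᵥ (fun o => o.elim 0 f) = 0 := by
      rw [dotProduct_mulVec, ← mulVec_transpose, hT', h1', zero_dotProduct]
    rw [heig', dotProduct_smul, smul_eq_mul] at h0
    exact (mul_eq_zero.mp h0).resolve_left hl0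
  have hR := kthEig_one_mul_le hH hc' h1' (hlpos.trans_le hlow) _ horth
  rw [heig', dotProduct_smul, smul_eq_mul, hext] at hR
  exact le_of_mul_le_mul_right hR hff
end

section
/- Let T be a tree that has minimal algebraic connectivity among all trees with a given degree sequence π. Then T is a caterpillar. -/
/-!
The proof is an exchange argument with a Fiedler vector `f` of the minimal tree `T`, that is, an
eigenvector for `α = α(T) > 0` orthogonal to the constants.

Let `vu` and `pw` be edges of `T` whose branches `B ∋ u` and `A ∋ w` are disjoint and avoid
`v ≠ p`. Replacing `vu`, `pw` by `vw`, `pu` gives a tree `T'` with the same degrees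
(`isTree_swap`, `degree_swap`). With `δ = f p - f v`, the function `g = f + δ 1_B - δ 1_A` has in
`T'` the same Dirichlet energy as `f` in `T`. Its sum of squared deviations from the mean is that of
`f` plus `2 δ (∑_B f - ∑_A f) + δ² (|B| + |A| - (|B| - |A|)² / n)`, where `n` is the number of
vertices, and the coefficient of `δ²` is positive. Summing the eigenvalue equation over a branch
gives `α ∑_B f = f u - f v`. Since `α(T) ≤ α(T')`, it follows that `f v < f p` forces
`f u - f v < f w - f p`; when `f v = f p`, the function `f` is an eigenvector of `T'` as well, which
forces `f u = f w` (`exchange`).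

Suppose a vertex `v` has three non-pendant neighbours; replacing `f` by `-f`, let `f v ≥ 0`.
The exchange inequality, applied between `v` and a neighbour, shows that `f` increases from `v`
towards at most one non-pendant neighbour (`not_two_increasing`). If `f v > 0`, then `f` fails to
increase towards at most one neighbour: otherwise a combination of `f - f v` restricted to two
branches, with coefficients making its sum zero, has Rayleigh quotient below `α`
(`not_two_nonincreasing`). So `f v = 0`. Two of the neighbours cannot both have positive or both
negative values, hence one of them has value zero, the equality case forces the others to vanish
too, and from there the zeros spread to the whole tree (`false_of_zero`), a contradiction.

Thus no vertex has three non-pendant neighbours (`no_branching`), and a longest path of non-pendant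
vertices contains all of them (`isCaterpillar_of_no_branching`).
-/

open Matrix BigOperators
open scoped Classical

namespace Caterpillar

set_option linter.unusedSectionVars false

variable {V : Type*} [Fintype V] [DecidableEq V]

/-! ### Spectral characterisation of the algebraic connectivity -/

/-- Entry of the adjacency matrix, as a real number. -/
noncomputable def adjW (G : SimpleGraph V) (x y : V) : ℝ := if G.Adj x y then 1 else 0

/-- The graph Laplacian acting on functions: `(L f) x = ∑_{y ∼ x} (f x - f y)`. -/
noncomputable def lap (G : SimpleGraph V) (f : V → ℝ) (x : V) : ℝ :=
  ∑ y, adjW G x y * (f x - f y)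

/-- Twice the Dirichlet energy of `f`: every edge is counted in both directions. -/
noncomputable def energy (G : SimpleGraph V) (f : V → ℝ) : ℝ :=
  ∑ x, ∑ y, adjW G x y * (f x - f y) ^ 2

lemma adjW_symm (G : SimpleGraph V) (x y : V) : adjW G x y = adjW G y x := by
  simp only [adjW, G.adj_comm x y]

lemma lapMatrix_mulVec (G : SimpleGraph V) (f : V → ℝ) : G.lapMatrix ℝ *ᵥ f = lap G f := by
  ext x
  rw [SimpleGraph.lapMatrix_mulVec_apply, SimpleGraph.degree_eq_sum_if_adj, lap]
  simp only [adjW, mul_sub, Finset.sum_sub_distrib, Finset.sum_mul]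
  congr 1
  simp only [ite_mul, one_mul, zero_mul]
  rw [← Finset.sum_filter]
  congr 1
  ext; simp

lemma sum_mul_lap (G : SimpleGraph V) (h k : V → ℝ) :
    ∑ x, h x * lap G k x = (∑ x, ∑ y, adjW G x y * ((h x - h y) * (k x - k y))) / 2 := by
  have e1 : ∑ x, h x * lap G k x = ∑ x, ∑ y, adjW G x y * (h x * (k x - k y)) := by
    simp only [lap, Finset.mul_sum]
    exact Finset.sum_congr rfl fun x _ => Finset.sum_congr rfl fun y _ => by ring
  have e2 : ∑ x, h x * lap G k x = ∑ x, ∑ y, adjW G x y * (h y * (k y - k x)) := by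
    rw [e1, Finset.sum_comm]
    exact Finset.sum_congr rfl fun x _ => Finset.sum_congr rfl fun y _ => by
      rw [adjW_symm]
  have e3 : ∑ x, ∑ y, adjW G x y * ((h x - h y) * (k x - k y)) =
      ∑ x, ∑ y, adjW G x y * (h x * (k x - k y)) + ∑ x, ∑ y, adjW G x y * (h y * (k y - k x)) := by
    simp only [← Finset.sum_add_distrib]
    exact Finset.sum_congr rfl fun x _ => Finset.sum_congr rfl fun y _ => by ring
  linarith

lemma sum_mul_lap_self (G : SimpleGraph V) (h : V → ℝ) :
    ∑ x, h x * lap G h x = energy G h / 2 := by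
  rw [sum_mul_lap, energy]
  simp only [pow_two]

lemma sum_mul_lap_comm (G : SimpleGraph V) (h k : V → ℝ) :
    ∑ x, h x * lap G k x = ∑ x, k x * lap G h x := by
  rw [sum_mul_lap, sum_mul_lap]
  congr 1
  exact Finset.sum_congr rfl fun x _ => Finset.sum_congr rfl fun y _ => by ring

lemma eq_of_lap_eq_zero {G : SimpleGraph V} (hG : G.Connected) {f : V → ℝ}
    (hf : ∀ x, lap G f x = 0) (x y : V) : f x = f y := by
  have h0 : G.lapMatrix ℝ *ᵥ f = 0 := by rw [lapMatrix_mulVec]; exact funext hf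
  exact (G.lapMatrix_mulVec_eq_zero_iff_forall_reachable.1 h0) x y (hG.preconnected x y)

/-- `f` is a Fiedler vector: an eigenvector for the algebraic connectivity orthogonal to the
constants. -/
structure IsFiedler (G : SimpleGraph V) (f : V → ℝ) : Prop where
  ne_zero : f ≠ 0
  sum_eq_zero : ∑ x, f x = 0
  lap_eq : ∀ x, lap G f x = algConn G * f x

/-- The sorted list of eigenvalues behind `kthEig` yields a Fiedler vector and the variational
inequality on the orthogonal complement of the constants. -/
lemma spectral {G : SimpleGraph V} (hG : G.Connected) (hc : 1 < Fintype.card V) :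
    (∃ f, IsFiedler G f) ∧
      ∀ h : V → ℝ, ∑ x, h x = 0 → algConn G * ∑ x, h x ^ 2 ≤ ∑ x, h x * lap G h x := by
  have hA : (G.lapMatrix ℝ).IsHermitian := G.isHermitian_lapMatrix ℝ
  set μ := hA.eigenvalues with hμ
  set b := hA.eigenvectorBasis with hb
  have hmul : ∀ i x, lap G (b i) x = μ i * b i x := by
    intro i x
    have := congrFun (hA.mulVec_eigenvectorBasis i) x
    rw [lapMatrix_mulVec] at this
    simpa using this
  have hinner : ∀ u v : EuclideanSpace ℝ V, inner ℝ u v = ∑ x, u x * v x := by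
    intro u v
    simp [PiLp.inner_apply, mul_comm]
  obtain ⟨i0, i1, h01, hle, hmin, hα⟩ : ∃ i0 i1 : V, i0 ≠ i1 ∧ (∀ i, μ i0 ≤ μ i) ∧
      (∀ i, i ≠ i0 → μ i1 ≤ μ i) ∧ algConn G = μ i1 := by
    let e := Fintype.equivFin V
    let g : Fin (Fintype.card V) → ℝ := μ ∘ e.symm
    have hmono : Monotone (g ∘ Tuple.sort g) := Tuple.monotone_sort g
    have hrep : ∀ i, ∃ j : Fin (Fintype.card V), i = e.symm (Tuple.sort g j) := fun i =>
      ⟨(Tuple.sort g).symm (e i), by simp⟩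
    refine ⟨e.symm (Tuple.sort g ⟨0, by omega⟩), e.symm (Tuple.sort g ⟨1, hc⟩), ?_, ?_, ?_, ?_⟩
    · simp
    · intro i
      obtain ⟨j, rfl⟩ := hrep i
      exact hmono (Fin.mk_le_of_le_val (Nat.zero_le _))
    · intro i hi
      obtain ⟨j, rfl⟩ := hrep i
      refine hmono (Fin.mk_le_of_le_val ?_)
      by_contra hlt
      apply hi
      congr 2
      ext
      simp; omega
    · rw [algConn, kthEig, dif_pos hA, dif_pos hc]; rfl
  have hbinner : ∀ i (k : V → ℝ), ∑ x, b i x * lap G k x = μ i * ∑ x, b i x * k x := by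
    intro i k
    rw [sum_mul_lap_comm, Finset.mul_sum]
    exact Finset.sum_congr rfl fun x _ => by rw [hmul]; ring
  have hnorm : ∀ i, ∑ x, b i x * b i x = 1 := by
    intro i
    rw [← hinner, real_inner_self_eq_norm_sq, b.norm_eq_one]; norm_num
  have hne : ∀ i, (b i : V → ℝ) ≠ 0 := by
    intro i h
    have := hnorm i
    simp [h] at this
  have hnonneg : ∀ i, 0 ≤ μ i := by
    intro i
    have h1 := hbinner i (b i)
    rw [hnorm, sum_mul_lap_self, mul_one] at h1
    rw [← h1]
    unfold energy
    refine div_nonneg (Finset.sum_nonneg fun x _ => Finset.sum_nonneg fun y _ =>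
      mul_nonneg ?_ (sq_nonneg _)) zero_le_two
    unfold adjW; split_ifs <;> norm_num
  have hpars : ∀ u v : V → ℝ, ∑ x, u x * v x =
      ∑ i, (∑ x, b i x * u x) * (∑ x, b i x * v x) := by
    intro u v
    have := b.sum_inner_mul_inner (WithLp.toLp 2 u) (WithLp.toLp 2 v)
    simp only [hinner] at this
    rw [← this]
    exact Finset.sum_congr rfl fun i _ => by simp only [mul_comm]
  have h0 : μ i0 = 0 := by
    by_contra h
    have hpos : ∀ i, μ i ≠ 0 := fun i =>
      (lt_of_lt_of_le (lt_of_le_of_ne (hnonneg i0) (Ne.symm h)) (hle i)).ne'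
    have hz : ∀ i, ∑ x, b i x * (1 : ℝ) = 0 := by
      intro i
      have := hbinner i (fun _ => 1)
      simp only [lap, sub_self, mul_zero, Finset.sum_const_zero] at this
      exact (mul_eq_zero.1 this.symm).resolve_left (hpos i)
    have := hpars (fun _ => 1) (fun _ => 1)
    simp only [hz, mul_zero, Finset.sum_const_zero] at this
    simp at this
    omega
  have hconst : ∀ x y, b i0 x = b i0 y :=
    eq_of_lap_eq_zero hG (f := b i0) fun x => by rw [hmul, h0, zero_mul]
  have horth : ∀ k : V → ℝ, ∑ x, b i0 x * k x = 0 ↔ ∑ x, k x = 0 := by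
    intro k
    obtain ⟨z, hz⟩ := Function.ne_iff.1 (hne i0)
    have : ∑ x, b i0 x * k x = b i0 z * ∑ x, k x := by
      rw [Finset.mul_sum]
      exact Finset.sum_congr rfl fun x _ => by rw [hconst x z]
    rw [this, mul_eq_zero]
    exact or_iff_right hz
  refine ⟨⟨b i1, hne i1, ?_, fun x => by rw [hmul, hα]⟩, ?_⟩
  · rw [← horth, ← hinner, b.inner_eq_zero h01]
  · intro h hh
    rw [hpars h (lap G h)]
    have : ∑ x, h x ^ 2 = ∑ i, (∑ x, b i x * h x) * (∑ x, b i x * h x) := by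
      rw [← hpars]; simp only [pow_two]
    rw [this, Finset.mul_sum]
    refine Finset.sum_le_sum fun i _ => ?_
    rw [hbinner, hα]
    by_cases hi : i = i0
    · rw [hi, (horth h).2 hh]; simp
    · nlinarith [hmin i hi, mul_self_nonneg (∑ x, b i x * h x)]

lemma IsFiedler.neg {G : SimpleGraph V} {f : V → ℝ} (hf : IsFiedler G f) :
    IsFiedler G (fun x => -f x) := by
  refine ⟨fun h => hf.ne_zero ?_, by simp [hf.sum_eq_zero], fun x => ?_⟩
  · ext x
    simpa using congrFun h x
  · have := hf.lap_eq x
    rw [mul_neg, ← this]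
    simp only [lap, ← Finset.sum_neg_distrib]
    exact Finset.sum_congr rfl fun y _ => by ring

lemma sum_sq_pos {f : V → ℝ} (hf : f ≠ 0) : 0 < ∑ x, f x ^ 2 := by
  obtain ⟨z, hz⟩ := Function.ne_iff.1 hf
  exact Finset.sum_pos' (fun _ _ => sq_nonneg _) ⟨z, Finset.mem_univ _, sq_pos_of_ne_zero hz⟩

lemma IsFiedler.energy_eq {G : SimpleGraph V} {f : V → ℝ} (hf : IsFiedler G f) :
    energy G f / 2 = algConn G * ∑ x, f x ^ 2 := by
  rw [← sum_mul_lap_self, Finset.mul_sum]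
  exact Finset.sum_congr rfl fun x _ => by rw [hf.lap_eq]; ring

lemma algConn_pos {G : SimpleGraph V} (hG : G.Connected) {f : V → ℝ} (hf : IsFiedler G f) :
    0 < algConn G := by
  have hpos := sum_sq_pos hf.ne_zero
  have hE : 0 ≤ energy G f := by
    unfold energy
    refine Finset.sum_nonneg fun x _ => Finset.sum_nonneg fun y _ =>
      mul_nonneg ?_ (sq_nonneg _)
    unfold adjW; split_ifs <;> norm_num
  have h1 := hf.energy_eq
  have h2 : 0 ≤ algConn G := by
    by_contra h
    nlinarith
  refine lt_of_le_of_ne h2 fun h => hf.ne_zero ?_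
  have hc := eq_of_lap_eq_zero hG (f := f) fun x => by rw [hf.lap_eq, ← h, zero_mul]
  ext z
  have hs := hf.sum_eq_zero
  rw [Finset.sum_congr rfl fun x _ => hc x z, Finset.sum_const, nsmul_eq_mul, mul_eq_zero] at hs
  refine hs.resolve_left ?_
  have : Nonempty V := ⟨z⟩
  simp

/-- The variational inequality for functions that need not be orthogonal to the constants:
`∑ g²` is replaced by the variance of `g`. -/
lemma algConn_mul_variance_le {G : SimpleGraph V} (hG : G.Connected) (hc : 1 < Fintype.card V)
    (g : V → ℝ) :
    algConn G * (∑ x, g x ^ 2 - (∑ x, g x) ^ 2 / Fintype.card V) ≤ energy G g / 2 := by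
  have hn : (Fintype.card V : ℝ) ≠ 0 := by
    have : Fintype.card V ≠ 0 := by omega
    exact_mod_cast this
  set m : ℝ := (∑ x, g x) / Fintype.card V with hm
  have hsum : ∑ x, (g x - m) = 0 := by
    rw [Finset.sum_sub_distrib, Finset.sum_const, nsmul_eq_mul, Finset.card_univ, hm]
    field_simp
    ring
  have h := (spectral hG hc).2 (fun x => g x - m) hsum
  rw [sum_mul_lap_self] at h
  have e1 : energy G (fun x => g x - m) = energy G g := by
    simp only [energy, sub_sub_sub_cancel_right]
  have e2 : ∑ x, (g x - m) ^ 2 = ∑ x, g x ^ 2 - (∑ x, g x) ^ 2 / Fintype.card V := by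
    have : ∀ x, (g x - m) ^ 2 = g x ^ 2 - 2 * m * g x + m ^ 2 := fun x => by ring
    simp only [this]
    rw [Finset.sum_add_distrib, Finset.sum_sub_distrib, ← Finset.mul_sum, Finset.sum_const,
      nsmul_eq_mul, Finset.card_univ, hm]
    field_simp
    ring
  rwa [e1, e2] at h

/-- Equality in the variational inequality forces an eigenvector: otherwise the residual
`k = L h - α h` would be a direction of strict decrease. -/
lemma lap_eq_of_energy_le {G : SimpleGraph V} (hG : G.Connected) (hc : 1 < Fintype.card V)
    {h : V → ℝ} (hs : ∑ x, h x = 0) (hE : energy G h / 2 ≤ algConn G * ∑ x, h x ^ 2) (x : V) :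
    lap G h x = algConn G * h x := by
  set α := algConn G with hα
  set k : V → ℝ := fun x => lap G h x - α * h x with hk
  have hl : ∑ x, lap G h x = 0 := by
    have := sum_mul_lap_comm G (fun _ => 1) h
    simpa [lap] using this
  have hks : ∑ x, k x = 0 := by
    simp only [hk, Finset.sum_sub_distrib, ← Finset.mul_sum, hs, hl]; ring
  have hkk : ∑ x, k x * lap G h x - α * ∑ x, k x * h x = ∑ x, k x ^ 2 := by
    rw [Finset.mul_sum, ← Finset.sum_sub_distrib]
    exact Finset.sum_congr rfl fun x _ => by simp only [hk]; ring
  rw [← sum_mul_lap_self] at hE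
  set N := ∑ x, k x ^ 2 with hN
  set Q := ∑ x, k x * lap G k x - α * ∑ x, k x ^ 2 with hQ
  have key : ∀ t : ℝ, 0 ≤ 2 * t * N + t ^ 2 * Q := by
    intro t
    have h1 := (spectral hG hc).2 (fun x => h x + t * k x)
      (by rw [Finset.sum_add_distrib, ← Finset.mul_sum, hs, hks]; ring)
    have hlap : ∀ x, lap G (fun x => h x + t * k x) x = lap G h x + t * lap G k x := by
      intro x
      simp only [lap, Finset.mul_sum, ← Finset.sum_add_distrib]
      exact Finset.sum_congr rfl fun y _ => by ring
    simp only [hlap] at h1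
    have e1 : ∑ x, (h x + t * k x) * (lap G h x + t * lap G k x) =
        ∑ x, h x * lap G h x + t * ∑ x, h x * lap G k x + t * ∑ x, k x * lap G h x +
          t ^ 2 * ∑ x, k x * lap G k x := by
      simp only [Finset.mul_sum, ← Finset.sum_add_distrib]
      exact Finset.sum_congr rfl fun y _ => by ring
    have e2 : ∑ x, (h x + t * k x) ^ 2 =
        ∑ x, h x ^ 2 + 2 * t * ∑ x, k x * h x + t ^ 2 * ∑ x, k x ^ 2 := by
      simp only [Finset.mul_sum, ← Finset.sum_add_distrib]
      exact Finset.sum_congr rfl fun y _ => by ring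
    rw [e1, e2, sum_mul_lap_comm G h k, ← hα] at h1
    rw [← hkk, hQ]
    linarith
  have hN0 : N = 0 := by
    have hNn : 0 ≤ N := Finset.sum_nonneg fun _ _ => sq_nonneg _
    by_contra hne
    have hNp : 0 < N := lt_of_le_of_ne hNn (Ne.symm hne)
    -- `t` is small enough for the linear term to dominate the quadratic one
    have h1 := key (-(N / (|Q| + 1)))
    have hd : 0 < |Q| + 1 := by positivity
    have hs : 0 < N / (|Q| + 1) := div_pos hNp hd
    have hs' : N / (|Q| + 1) * (|Q| + 1) = N := div_mul_cancel₀ _ hd.ne'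
    have hq := le_abs_self Q
    nlinarith [mul_pos hs hs, mul_pos hs hNp]
  have := (Finset.sum_eq_zero_iff_of_nonneg fun x _ => sq_nonneg (k x)).1 hN0 x (Finset.mem_univ _)
  have := pow_eq_zero_iff (two_ne_zero) |>.1 this
  simp only [hk] at this
  linarith

/-! ### Branches and the exchange of two branches -/

/-- `B` is the side of `u` when the edge `vu` is the only edge between `B` and its complement. -/
structure IsCut (T : SimpleGraph V) (v u : V) (B : Finset V) : Prop where
  adj : T.Adj v u
  mem : u ∈ B
  notMem : v ∉ B
  cross : ∀ x ∈ B, ∀ y, y ∉ B → T.Adj x y → x = u ∧ y = v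

/-- The branch at `v` through its neighbour `u`: the component containing `u` after the edge `vu`
is deleted. -/
noncomputable def branch (T : SimpleGraph V) (v u : V) : Finset V :=
  Finset.univ.filter fun x => (T.deleteEdges {s(v, u)}).Reachable u x

lemma mem_branch {T : SimpleGraph V} {v u x : V} :
    x ∈ branch T v u ↔ (T.deleteEdges {s(v, u)}).Reachable u x := by
  simp [branch]

lemma isCut_branch {T : SimpleGraph V} (hT : T.IsTree) {v u : V} (h : T.Adj v u) :
    IsCut T v u (branch T v u) := by
  have hb := SimpleGraph.isAcyclic_iff_forall_adj_isBridge.1 hT.isAcyclic h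
  rw [SimpleGraph.isBridge_iff] at hb
  refine ⟨h, mem_branch.2 (SimpleGraph.Reachable.refl _), fun hv => hb (mem_branch.1 hv).symm, ?_⟩
  intro x hx y hy hxy
  by_cases he : s(x, y) = s(v, u)
  · rcases Sym2.eq_iff.1 he with ⟨rfl, rfl⟩ | ⟨rfl, rfl⟩
    · exact absurd (mem_branch.1 hx).symm hb
    · exact ⟨rfl, rfl⟩
  · refine absurd (mem_branch.2 ((mem_branch.1 hx).trans (SimpleGraph.Adj.reachable ?_))) hy
    rw [SimpleGraph.deleteEdges_adj]
    exact ⟨hxy, he⟩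

/-- Branches that do not point at each other are disjoint. -/
lemma disjoint_branch {T : SimpleGraph V} (hT : T.IsTree) {v u p w : V} (h : T.Adj v u)
    (h' : T.Adj p w) (hw : w ∉ branch T v u) (hv : v ∉ branch T p w) :
    Disjoint (branch T v u) (branch T p w) := by
  rw [Finset.disjoint_right]
  intro x hx
  obtain ⟨q⟩ := mem_branch.1 hx
  have key : ∀ {a b : V} (q : (T.deleteEdges {s(p, w)}).Walk a b), a ∈ branch T p w →
      a ∉ branch T v u → b ∉ branch T v u := by
    intro a b q
    induction q with
    | nil => exact fun _ h => h
    | @cons a c b hac q ih =>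
      intro ha ha'
      have hc : c ∈ branch T p w := mem_branch.2 ((mem_branch.1 ha).trans hac.reachable)
      refine ih hc fun hc' => ?_
      have := (isCut_branch hT h).cross c hc' a ha' (SimpleGraph.deleteEdges_adj.1 hac).1.symm
      exact hv (this.2 ▸ ha)
  have hm := (isCut_branch hT h').mem
  exact key q hm hw

/-- The total of `L f` over a branch is the difference of `f` along the edge leaving it: all other
edges contribute to both endpoints with opposite signs. -/
lemma sum_lap_cut {T : SimpleGraph V} {v u : V} {B : Finset V} (hB : IsCut T v u B) (f : V → ℝ) :
    ∑ x ∈ B, lap T f x = f u - f v := by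
  have h1 : ∑ x ∈ B, ∑ y ∈ B, adjW T x y * (f x - f y) = 0 := by
    have : ∑ x ∈ B, ∑ y ∈ B, adjW T x y * (f x - f y) =
        -∑ x ∈ B, ∑ y ∈ B, adjW T x y * (f x - f y) := by
      conv_lhs => rw [Finset.sum_comm]
      simp only [← Finset.sum_neg_distrib]
      refine Finset.sum_congr rfl fun x _ => Finset.sum_congr rfl fun y _ => ?_
      rw [adjW_symm]; ring
    linarith
  have h2 : ∀ x ∈ B, ∑ y ∈ Bᶜ, adjW T x y * (f x - f y) = if x = u then f u - f v else 0 := by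
    intro x hx
    split_ifs with hxu
    · subst hxu
      rw [Finset.sum_eq_single v]
      · simp [adjW, hB.adj.symm]
      · intro y hy hyv
        rw [adjW, if_neg, zero_mul]
        exact fun h => hyv (hB.cross x hx y (Finset.mem_compl.1 hy) h).2
      · exact fun h => absurd (Finset.mem_compl.2 hB.notMem) h
    · refine Finset.sum_eq_zero fun y hy => ?_
      rw [adjW, if_neg, zero_mul]
      exact fun h => hxu (hB.cross x hx y (Finset.mem_compl.1 hy) h).1
  have h3 : ∑ x ∈ B, lap T f x = ∑ x ∈ B, (∑ y ∈ B, adjW T x y * (f x - f y) +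
      ∑ y ∈ Bᶜ, adjW T x y * (f x - f y)) :=
    Finset.sum_congr rfl fun x _ => (Finset.sum_add_sum_compl B _).symm
  rw [h3, Finset.sum_add_distrib, h1, Finset.sum_congr rfl h2, Finset.sum_ite_eq', if_pos hB.mem,
    zero_add]

lemma IsFiedler.sum_cut {T : SimpleGraph V} {f : V → ℝ} (hf : IsFiedler T f) {v u : V}
    {B : Finset V} (hB : IsCut T v u B) : algConn T * ∑ x ∈ B, f x = f u - f v := by
  rw [← sum_lap_cut hB f, Finset.mul_sum]
  exact Finset.sum_congr rfl fun x _ => (hf.lap_eq x).symm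

/-- The graph obtained from `T` by replacing the edges `vu`, `pw` by `vw`, `pu`. -/
def swap (T : SimpleGraph V) (v u p w : V) : SimpleGraph V :=
  SimpleGraph.fromEdgeSet ((T.edgeSet \ {s(v, u), s(p, w)}) ∪ {s(v, w), s(p, u)})

/-- The indicator of the edge `ab`. -/
noncomputable def edgeW (a b x y : V) : ℝ := if s(x, y) = s(a, b) then 1 else 0

/-- Two disjoint cuts with distinct attaching vertices: the setting for exchanging the branches
`B` and `A`. -/
structure SwapData (T : SimpleGraph V) (v u p w : V) (B A : Finset V) : Prop where
  cutB : IsCut T v u B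
  cutA : IsCut T p w A
  disj : Disjoint B A
  ne : v ≠ p
  pB : p ∉ B
  vA : v ∉ A

lemma sum_edgeW {a b : V} (hab : a ≠ b) (x : V) (φ : V → ℝ) :
    ∑ y, edgeW a b x y * φ y = (if x = a then φ b else 0) + (if x = b then φ a else 0) := by
  have : ∀ y, edgeW a b x y * φ y =
      (if y = b then (if x = a then φ b else 0) else 0) +
      (if y = a then (if x = b then φ a else 0) else 0) := by
    intro y
    unfold edgeW
    simp only [Sym2.eq_iff]
    grind
  simp only [this, Finset.sum_add_distrib, Finset.sum_ite_eq', Finset.mem_univ, if_true]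

lemma sum_sum_edgeW {a b : V} (hab : a ≠ b) (φ : V → V → ℝ) :
    ∑ x, ∑ y, edgeW a b x y * φ x y = φ a b + φ b a := by
  simp only [sum_edgeW hab, Finset.sum_add_distrib, Finset.sum_ite_eq', Finset.mem_univ, if_true]

lemma degree_eq_sum (G : SimpleGraph V) (x : V) :
    (G.degree x : ℝ) = ∑ y, adjW G x y := by
  rw [SimpleGraph.degree_eq_sum_if_adj]; rfl

namespace SwapData

variable {T : SimpleGraph V} {v u p w : V} {B A : Finset V} (D : SwapData T v u p w B A)
include D

lemma nes : v ≠ u ∧ v ≠ w ∧ p ≠ u ∧ p ≠ w ∧ u ≠ w := by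
  refine ⟨D.cutB.adj.ne, ?_, ?_, D.cutA.adj.ne, ?_⟩
  · rintro rfl; exact D.vA D.cutA.mem
  · rintro rfl; exact D.pB D.cutB.mem
  · rintro rfl; exact Finset.disjoint_left.1 D.disj D.cutB.mem D.cutA.mem

lemma not_adj : ¬ T.Adj v w ∧ ¬ T.Adj p u := by
  refine ⟨fun h => D.ne ?_, fun h => D.ne ?_⟩
  · exact (D.cutA.cross w D.cutA.mem v D.vA h.symm).2
  · exact (D.cutB.cross u D.cutB.mem p D.pB h.symm).2.symm

lemma adjW_swap (x y : V) : adjW (swap T v u p w) x y =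
    adjW T x y - edgeW v u x y - edgeW p w x y + edgeW v w x y + edgeW p u x y := by
  obtain ⟨h1, h2, h3, h4, h5⟩ := D.nes
  obtain ⟨n1, n2⟩ := D.not_adj
  have a1 := D.cutB.adj
  have a2 := D.cutA.adj
  have hne := D.ne
  have hadj : (swap T v u p w).Adj x y ↔ ((T.Adj x y ∧ s(x, y) ≠ s(v, u) ∧ s(x, y) ≠ s(p, w)) ∨
      s(x, y) = s(v, w) ∨ s(x, y) = s(p, u)) := by
    simp only [swap, SimpleGraph.fromEdgeSet_adj, Set.mem_union, Set.mem_sdiff,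
      SimpleGraph.mem_edgeSet, Set.mem_insert_iff, Set.mem_singleton_iff, not_or, ne_eq]
    refine ⟨fun h => h.1, fun h => ⟨h, ?_⟩⟩
    rintro rfl
    rcases h with h | h | h
    · exact T.loopless.irrefl _ h.1
    · rw [Sym2.eq_iff] at h; grind
    · rw [Sym2.eq_iff] at h; grind
  have t1 : s(x, y) = s(v, u) → T.Adj x y := fun h => by
    rw [← SimpleGraph.mem_edgeSet, h]; exact a1
  have t2 : s(x, y) = s(p, w) → T.Adj x y := fun h => by
    rw [← SimpleGraph.mem_edgeSet, h]; exact a2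
  have t3 : s(x, y) = s(v, w) → ¬ T.Adj x y := fun h => by
    rw [← SimpleGraph.mem_edgeSet, h]; exact n1
  have t4 : s(x, y) = s(p, u) → ¬ T.Adj x y := fun h => by
    rw [← SimpleGraph.mem_edgeSet, h]; exact n2
  have d1 : s(v, u) ≠ s(p, w) := by rw [ne_eq, Sym2.eq_iff]; grind
  have d2 : s(v, w) ≠ s(p, u) := by rw [ne_eq, Sym2.eq_iff]; grind
  unfold adjW edgeW
  simp only [hadj]
  by_cases c1 : s(x, y) = s(v, u)
  · have := t1 c1
    grind
  by_cases c2 : s(x, y) = s(p, w)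
  · have := t2 c2
    grind
  by_cases c3 : s(x, y) = s(v, w)
  · have := t3 c3
    grind
  by_cases c4 : s(x, y) = s(p, u)
  · have := t4 c4
    grind
  simp [c1, c2, c3, c4]

lemma sum_adjW_swap (x : V) (φ : V → ℝ) : ∑ y, adjW (swap T v u p w) x y * φ y =
    ∑ y, adjW T x y * φ y
      - ((if x = v then φ u else 0) + (if x = u then φ v else 0))
      - ((if x = p then φ w else 0) + (if x = w then φ p else 0))
      + ((if x = v then φ w else 0) + (if x = w then φ v else 0))
      + ((if x = p then φ u else 0) + (if x = u then φ p else 0)) := by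
  obtain ⟨h1, h2, h3, h4, h5⟩ := D.nes
  rw [← sum_edgeW h1, ← sum_edgeW h2, ← sum_edgeW h3, ← sum_edgeW h4, ← Finset.sum_sub_distrib,
    ← Finset.sum_sub_distrib, ← Finset.sum_add_distrib, ← Finset.sum_add_distrib]
  exact Finset.sum_congr rfl fun y _ => by rw [D.adjW_swap]; ring

lemma degree_swap (x : V) : (swap T v u p w).degree x = T.degree x := by
  have h := D.sum_adjW_swap x (fun _ => 1)
  simp only [mul_one] at h
  have : ((swap T v u p w).degree x : ℝ) = T.degree x := by
    rw [degree_eq_sum, degree_eq_sum, h]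
    ring
  exact_mod_cast this

/-- A function constant along the edges of the swapped graph becomes constant along the edges of
`T` after shifting it on the two exchanged branches; so connectedness carries over. -/
lemma preconnected_swap (hT : T.IsTree) : (swap T v u p w).Preconnected := by
  obtain ⟨h1, h2, h3, h4, h5⟩ := D.nes
  intro a b
  set G := swap T v u p w
  let h : V → ℤ := fun x => if G.Reachable a x then 1 else 0
  have hG : ∀ x y, G.Adj x y → h x = h y := by
    intro x y hxy
    have : G.Reachable a x ↔ G.Reachable a y :=
      ⟨fun k => k.trans hxy.reachable, fun k => k.trans hxy.symm.reachable⟩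
    simp only [h, this]
  have hvw : h v = h w := hG v w (by simp [G, swap, h2])
  have hpu : h p = h u := hG p u (by simp [G, swap, h3])
  let k : V → ℤ := fun x => h x + (if x ∈ B then h v - h p else 0) + (if x ∈ A then h p - h v else 0)
  have uA : u ∉ A := Finset.disjoint_left.1 D.disj D.cutB.mem
  have wB : w ∉ B := Finset.disjoint_right.1 D.disj D.cutA.mem
  have hk1 : k u = k v := by
    simp only [k, if_pos D.cutB.mem, if_neg uA, if_neg D.cutB.notMem, if_neg D.vA]; omega
  have hk2 : k w = k p := by
    simp only [k, if_pos D.cutA.mem, if_neg wB, if_neg D.cutA.notMem, if_neg D.pB]; omega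
  have hkT : ∀ x y, T.Adj x y → k x = k y := by
    intro x y hxy
    by_cases c1 : s(x, y) = s(v, u)
    · rcases Sym2.eq_iff.1 c1 with ⟨rfl, rfl⟩ | ⟨rfl, rfl⟩
      · exact hk1.symm
      · exact hk1
    by_cases c2 : s(x, y) = s(p, w)
    · rcases Sym2.eq_iff.1 c2 with ⟨rfl, rfl⟩ | ⟨rfl, rfl⟩
      · exact hk2.symm
      · exact hk2
    have e0 : h x = h y := hG x y (by
      simp only [G, swap, SimpleGraph.fromEdgeSet_adj, Set.mem_union, Set.mem_sdiff,
        SimpleGraph.mem_edgeSet, Set.mem_insert_iff, Set.mem_singleton_iff]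
      exact ⟨Or.inl ⟨hxy, by tauto⟩, hxy.ne⟩)
    have e1 : x ∈ B ↔ y ∈ B := by
      constructor <;> intro hm <;> by_contra hn
      · obtain ⟨rfl, rfl⟩ := D.cutB.cross _ hm _ hn hxy
        exact c1 Sym2.eq_swap
      · obtain ⟨rfl, rfl⟩ := D.cutB.cross _ hm _ hn hxy.symm
        exact c1 rfl
    have e2 : x ∈ A ↔ y ∈ A := by
      constructor <;> intro hm <;> by_contra hn
      · obtain ⟨rfl, rfl⟩ := D.cutA.cross _ hm _ hn hxy
        exact c2 Sym2.eq_swap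
      · obtain ⟨rfl, rfl⟩ := D.cutA.cross _ hm _ hn hxy.symm
        exact c2 rfl
    simp only [k, e0, e1, e2]
  have hkc : ∀ x y, k x = k y := by
    intro x y
    obtain ⟨q⟩ := hT.connected.preconnected x y
    induction q with
    | nil => rfl
    | cons hac _ ih => exact (hkT _ _ hac).trans ih
  have hvp : h v = h p := by
    have := hkc v p
    simpa only [k, if_neg D.cutB.notMem, if_neg D.vA, if_neg D.cutA.notMem, if_neg D.pB,
      add_zero] using this
  have hab : h a = h b := by
    have := hkc a b
    simpa only [k, hvp, sub_self, ite_self, add_zero] using this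
  have ha : h a = 1 := if_pos (SimpleGraph.Reachable.refl _)
  rw [ha] at hab
  by_contra hn
  simp [h, hn] at hab

lemma isTree_swap (hT : T.IsTree) : (swap T v u p w).IsTree := by
  rw [SimpleGraph.isTree_iff_connected_and_card]
  have : Nonempty V := ⟨v⟩
  refine ⟨⟨D.preconnected_swap hT⟩, ?_⟩
  rw [← (SimpleGraph.isTree_iff_connected_and_card.1 hT).2]
  have h1 := (swap T v u p w).sum_degrees_eq_twice_card_edges
  have h2 := T.sum_degrees_eq_twice_card_edges
  simp only [D.degree_swap, h2] at h1
  rw [SimpleGraph.edgeFinset_card, SimpleGraph.edgeFinset_card, ← Nat.card_eq_fintype_card,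
    ← Nat.card_eq_fintype_card] at h1
  omega

lemma degSeq_swap : degSeq (swap T v u p w) = degSeq T := by
  unfold degSeq
  exact Multiset.map_congr rfl fun x _ => D.degree_swap x

end SwapData

/-! ### The exchange inequality -/

/-- The test function for the swapped graph: shift `f` on the branches `B` and `A` so that its
values stay compatible with the new attaching vertices. -/
noncomputable def shift (f : V → ℝ) (δ : ℝ) (B A : Finset V) (x : V) : ℝ :=
  f x + (if x ∈ B then δ else 0) - (if x ∈ A then δ else 0)

namespace SwapData

variable {T : SimpleGraph V} {v u p w : V} {B A : Finset V} (D : SwapData T v u p w B A)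
include D

lemma energy_shift (f : V → ℝ) :
    energy (swap T v u p w) (shift f (f p - f v) B A) = energy T f := by
  obtain ⟨h1, h2, h3, h4, h5⟩ := D.nes
  have uA : u ∉ A := Finset.disjoint_left.1 D.disj D.cutB.mem
  have wB : w ∉ B := Finset.disjoint_right.1 D.disj D.cutA.mem
  set g := shift f (f p - f v) B A with hg
  have gv : g v = f v := by simp [hg, shift, D.cutB.notMem, D.vA]
  have gp : g p = f p := by simp [hg, shift, D.cutA.notMem, D.pB]
  have gu : g u = f u + (f p - f v) := by simp [hg, shift, D.cutB.mem, uA]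
  have gw : g w = f w - (f p - f v) := by simp [hg, shift, D.cutA.mem, wB]
  have hpt : ∀ x y, adjW T x y * (g x - g y) ^ 2 = adjW T x y * (f x - f y) ^ 2 +
      (edgeW v u x y * ((g x - g y) ^ 2 - (f x - f y) ^ 2) +
        edgeW p w x y * ((g x - g y) ^ 2 - (f x - f y) ^ 2)) := by
    intro x y
    have d1 : s(v, u) ≠ s(p, w) := by
      have := D.ne
      rw [ne_eq, Sym2.eq_iff]; grind
    by_cases hxy : T.Adj x y
    · rw [adjW, if_pos hxy]
      by_cases c1 : s(x, y) = s(v, u)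
      · rw [edgeW, if_pos c1, edgeW, if_neg (by rw [c1]; exact d1)]; ring
      by_cases c2 : s(x, y) = s(p, w)
      · rw [edgeW, if_neg c1, edgeW, if_pos c2]; ring
      rw [edgeW, if_neg c1, edgeW, if_neg c2]
      have e1 : x ∈ B ↔ y ∈ B := by
        constructor <;> intro hm <;> by_contra hn
        · obtain ⟨rfl, rfl⟩ := D.cutB.cross _ hm _ hn hxy
          exact c1 Sym2.eq_swap
        · obtain ⟨rfl, rfl⟩ := D.cutB.cross _ hm _ hn hxy.symm
          exact c1 rfl
      have e2 : x ∈ A ↔ y ∈ A := by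
        constructor <;> intro hm <;> by_contra hn
        · obtain ⟨rfl, rfl⟩ := D.cutA.cross _ hm _ hn hxy
          exact c2 Sym2.eq_swap
        · obtain ⟨rfl, rfl⟩ := D.cutA.cross _ hm _ hn hxy.symm
          exact c2 rfl
      simp only [hg, shift, e1, e2]
      ring
    · have c1 : s(x, y) ≠ s(v, u) := fun h => hxy (by
        rw [← SimpleGraph.mem_edgeSet, h]; exact D.cutB.adj)
      have c2 : s(x, y) ≠ s(p, w) := fun h => hxy (by
        rw [← SimpleGraph.mem_edgeSet, h]; exact D.cutA.adj)
      rw [adjW, if_neg hxy, edgeW, if_neg c1, edgeW, if_neg c2]; ring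
  have hT : energy T g = energy T f + (((g v - g u) ^ 2 - (f v - f u) ^ 2) +
      ((g u - g v) ^ 2 - (f u - f v) ^ 2) + (((g p - g w) ^ 2 - (f p - f w) ^ 2) +
      ((g w - g p) ^ 2 - (f w - f p) ^ 2))) := by
    rw [← sum_sum_edgeW h1 (fun x y => (g x - g y) ^ 2 - (f x - f y) ^ 2),
      ← sum_sum_edgeW h4 (fun x y => (g x - g y) ^ 2 - (f x - f y) ^ 2)]
    simp only [energy, ← Finset.sum_add_distrib]
    exact Finset.sum_congr rfl fun x _ => Finset.sum_congr rfl fun y _ => hpt x y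
  have hS : energy (swap T v u p w) g = energy T g - ((g v - g u) ^ 2 + (g u - g v) ^ 2)
      - ((g p - g w) ^ 2 + (g w - g p) ^ 2) + ((g v - g w) ^ 2 + (g w - g v) ^ 2)
      + ((g p - g u) ^ 2 + (g u - g p) ^ 2) := by
    rw [← sum_sum_edgeW h1 (fun x y => (g x - g y) ^ 2),
      ← sum_sum_edgeW h2 (fun x y => (g x - g y) ^ 2),
      ← sum_sum_edgeW h3 (fun x y => (g x - g y) ^ 2),
      ← sum_sum_edgeW h4 (fun x y => (g x - g y) ^ 2)]
    simp only [energy, ← Finset.sum_add_distrib, ← Finset.sum_sub_distrib]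
    exact Finset.sum_congr rfl fun x _ => Finset.sum_congr rfl fun y _ => by
      rw [D.adjW_swap]; ring
  rw [hS, hT, gv, gp, gu, gw]
  ring

lemma sum_shift (f : V → ℝ) (δ : ℝ) :
    ∑ x, shift f δ B A x = ∑ x, f x + δ * (B.card - A.card) := by
  simp only [shift, Finset.sum_sub_distrib, Finset.sum_add_distrib, Finset.sum_ite_mem,
    Finset.univ_inter, Finset.sum_const, nsmul_eq_mul]
  ring

lemma sum_shift_sq (f : V → ℝ) (δ : ℝ) :
    ∑ x, shift f δ B A x ^ 2 = ∑ x, f x ^ 2 + 2 * δ * (∑ x ∈ B, f x - ∑ x ∈ A, f x) +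
      δ ^ 2 * (B.card + A.card) := by
  have : ∀ x, shift f δ B A x ^ 2 = f x ^ 2 + (if x ∈ B then 2 * δ * f x + δ ^ 2 else 0) +
      (if x ∈ A then -(2 * δ * f x) + δ ^ 2 else 0) := by
    intro x
    unfold shift
    by_cases hB : x ∈ B
    · have hA : x ∉ A := Finset.disjoint_left.1 D.disj hB
      simp only [hB, hA, if_true, if_false]; ring
    · by_cases hA : x ∈ A <;> simp only [hB, hA, if_true, if_false] <;> ring
  simp only [this, Finset.sum_add_distrib, Finset.sum_ite_mem, Finset.univ_inter, Finset.sum_const,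
    nsmul_eq_mul, Finset.sum_neg_distrib, ← Finset.mul_sum]
  ring

/-- The exchange inequality. If `T` minimises the algebraic connectivity, exchanging `B` and `A`
cannot increase the variance of the shifted Fiedler vector, whose energy is unchanged. When
`f v = f p` the shift is trivial, so `f` is an eigenvector of the swapped tree as well, and comparing
the two eigenvalue equations at `v` gives `f u = f w`. -/
lemma exchange (hT : T.IsTree)
    (hmin : ∀ T' : SimpleGraph V, T'.IsTree → degSeq T' = degSeq T → algConn T ≤ algConn T')
    {f : V → ℝ} (hf : IsFiedler T f) :
    (f v < f p → f u - f v < f w - f p) ∧ (f v = f p → f u = f w) := by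
  have hT' := D.isTree_swap hT
  have hle := hmin _ hT' D.degSeq_swap
  have hcard : 1 < Fintype.card V := Fintype.one_lt_card_iff.2 ⟨v, p, D.ne⟩
  have hα := algConn_pos hT.connected hf
  have hpos := sum_sq_pos hf.ne_zero
  constructor
  · intro hlt
    by_contra hge
    rw [not_lt, ← hf.sum_cut D.cutB, ← hf.sum_cut D.cutA] at hge
    have hs := le_of_mul_le_mul_left hge hα
    have h1 := algConn_mul_variance_le hT'.connected hcard (shift f (f p - f v) B A)
    rw [D.energy_shift, hf.energy_eq, D.sum_shift, D.sum_shift_sq, hf.sum_eq_zero, zero_add] at h1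
    set δ := f p - f v with hδ
    have hδ0 : 0 < δ := sub_pos.2 hlt
    have hb : (1 : ℝ) ≤ B.card := by exact_mod_cast Finset.card_pos.2 ⟨u, D.cutB.mem⟩
    have ha : (1 : ℝ) ≤ A.card := by exact_mod_cast Finset.card_pos.2 ⟨w, D.cutA.mem⟩
    have hn : (B.card : ℝ) + A.card ≤ Fintype.card V := by
      rw [← Nat.cast_add, ← Finset.card_union_of_disjoint D.disj]
      exact_mod_cast Finset.card_le_univ _
    have hq : ((B.card : ℝ) - A.card) ^ 2 / Fintype.card V < B.card + A.card := by
      rw [div_lt_iff₀ (by linarith)]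
      nlinarith [mul_le_mul_of_nonneg_left hn (by linarith : (0:ℝ) ≤ B.card + A.card)]
    have hvar : ∑ x, f x ^ 2 < ∑ x, f x ^ 2 + 2 * δ * (∑ x ∈ B, f x - ∑ x ∈ A, f x) +
        δ ^ 2 * (B.card + A.card) - (δ * (B.card - A.card)) ^ 2 / Fintype.card V := by
      have e : (δ * ((B.card : ℝ) - A.card)) ^ 2 / Fintype.card V =
          δ ^ 2 * (((B.card : ℝ) - A.card) ^ 2 / Fintype.card V) := by ring
      rw [e]
      have := mul_lt_mul_of_pos_left hq (pow_pos hδ0 2)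
      have := mul_nonneg hδ0.le (sub_nonneg.2 hs)
      linarith
    have h2 := mul_lt_mul_of_pos_left hvar hα
    have h3 := mul_le_mul_of_nonneg_right hle (hpos.trans hvar).le
    linarith
  · intro heq
    have hE := D.energy_shift f
    have hsh : shift f (f p - f v) B A = f := by
      ext x; simp [shift, heq]
    rw [hsh] at hE
    have hE2 : energy (swap T v u p w) f / 2 ≤ algConn (swap T v u p w) * ∑ x, f x ^ 2 := by
      rw [hE, hf.energy_eq]
      exact mul_le_mul_of_nonneg_right hle hpos.le
    -- `f` attains the minimum for both graphs, so the two eigenvalues agree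
    have hαeq : algConn (swap T v u p w) = algConn T := by
      refine le_antisymm ?_ hle
      have h1 := (spectral hT'.connected hcard).2 f hf.sum_eq_zero
      rw [sum_mul_lap_self, hE, hf.energy_eq] at h1
      exact le_of_mul_le_mul_right h1 hpos
    have h1 := lap_eq_of_energy_le hT'.connected hcard hf.sum_eq_zero hE2 v
    rw [hαeq, ← hf.lap_eq v, lap, D.sum_adjW_swap] at h1
    obtain ⟨n1, n2, n3, n4, n5⟩ := D.nes
    simp only [if_true, if_neg n1, if_neg n2, if_neg D.ne, lap] at h1
    linarith

end SwapData

/-! ### Vertices with three non-pendant neighbours -/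

section Branching

variable {T : SimpleGraph V} (hT : T.IsTree)
  (hmin : ∀ T' : SimpleGraph V, T'.IsTree → degSeq T' = degSeq T → algConn T ≤ algConn T')
  {f : V → ℝ} (hf : IsFiedler T f)
include hT

lemma swapData_branch {v u p w : V} (h : T.Adj v u) (h' : T.Adj p w) (hne : v ≠ p)
    (hp : p ∉ branch T v u) (hv : v ∉ branch T p w) :
    SwapData T v u p w (branch T v u) (branch T p w) := by
  refine ⟨isCut_branch hT h, isCut_branch hT h', disjoint_branch hT h h' ?_ hv, hne, hp, hv⟩
  intro hw
  exact hne ((isCut_branch hT h).cross w hw p hp h'.symm).2.symm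

lemma swapData_child {v u u' x : V} (h : T.Adj v u) (h' : T.Adj v u') (hne : u ≠ u')
    (hx : T.Adj u' x) (hxv : x ≠ v) :
    SwapData T v u u' x (branch T v u) (branch T u' x) := by
  refine swapData_branch hT h hx h'.ne ?_ ?_
  · intro hm
    exact hne ((isCut_branch hT h).cross _ hm v (isCut_branch hT h).notMem h'.symm).1.symm
  · intro hm
    exact hxv ((isCut_branch hT hx).cross _ hm u' (isCut_branch hT hx).notMem h').1.symm

include hf

/-- The eigenvalue equation at `u`, with the edge to the neighbour `v` singled out. -/
lemma lap_split {v u : V} (h : T.Adj v u) :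
    f u - f v = algConn T * f u +
      ∑ x ∈ (T.neighborFinset u).erase v, (f x - f u) := by
  have h1 := hf.lap_eq u
  have h2 : lap T f u = ∑ x ∈ T.neighborFinset u, (f u - f x) := by
    simp only [lap, adjW, ite_mul, one_mul, zero_mul]
    rw [← Finset.sum_filter]
    congr 1
    ext; simp
  rw [← h1, h2, ← Finset.add_sum_erase _ _ ((T.mem_neighborFinset u v).2 h.symm), add_assoc,
    ← Finset.sum_add_distrib]
  simp

include hmin

/-- At a vertex with `f v ≥ 0`, the Fiedler vector does not increase towards two neighbours of which
the lower one, `u₂`, is non-pendant: each branch hanging from `u₂` can be exchanged with the branch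
at `v` through `u₁`, so `f` increases from `u₂` to all its further neighbours by more than
`f u₁ - f v`, which contradicts the eigenvalue equation at `u₂`. -/
lemma not_two_increasing {v u₁ u₂ x : V} (h₁ : T.Adj v u₁) (h₂ : T.Adj v u₂) (hne : u₁ ≠ u₂)
    (hx : T.Adj u₂ x) (hxv : x ≠ v) (hv : 0 ≤ f v) (hlt : f v < f u₂) (hle : f u₂ ≤ f u₁) :
    False := by
  have key : ∀ y ∈ (T.neighborFinset u₂).erase v, f u₁ - f v < f y - f u₂ := by
    intro y hy
    rw [Finset.mem_erase, SimpleGraph.mem_neighborFinset] at hy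
    exact ((swapData_child hT h₁ h₂ hne hy.2 hy.1).exchange hT hmin hf).1 hlt
  have hs := lap_split hT hf h₂
  have hmem : x ∈ (T.neighborFinset u₂).erase v := by
    rw [Finset.mem_erase, SimpleGraph.mem_neighborFinset]; exact ⟨hxv, hx⟩
  have h1 := Finset.single_le_sum (f := fun y => f y - f u₂)
    (fun y hy => (by have := key y hy; linarith : (0:ℝ) ≤ f y - f u₂)) hmem
  have h2 := key x hmem
  have h3 := mul_pos (algConn_pos hT.connected hf) (hv.trans_lt hlt)
  linarith

omit hmin in
/-- At a vertex with `f v > 0`, the Fiedler vector fails to increase towards at most one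
neighbour: two such branches would carry a test function with smaller Rayleigh quotient. -/
lemma not_two_nonincreasing {v u₁ u₂ : V} (h₁ : T.Adj v u₁) (h₂ : T.Adj v u₂) (hne : u₁ ≠ u₂)
    (hv : 0 < f v) (hle₁ : f u₁ ≤ f v) (hle₂ : f u₂ ≤ f v) : False := by
  have C₁ := isCut_branch hT h₁
  have C₂ := isCut_branch hT h₂
  have hdisj : Disjoint (branch T v u₁) (branch T v u₂) :=
    disjoint_branch hT h₁ h₂
      (fun hm => hne (C₁.cross _ hm v C₁.notMem h₂.symm).1.symm) C₂.notMem
  set B₁ := branch T v u₁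
  set B₂ := branch T v u₂
  have hα := algConn_pos hT.connected hf
  have hcard : 1 < Fintype.card V := Fintype.one_lt_card_iff.2 ⟨v, u₁, h₁.ne⟩
  have hneg : ∀ {u : V} {B : Finset V}, IsCut T v u B → f u ≤ f v →
      ∑ x ∈ B, (f x - f v) < 0 := by
    intro u B C hle
    have h1 := hf.sum_cut C
    have h2 : ∑ x ∈ B, f x ≤ 0 := by
      by_contra h
      have := mul_pos hα (not_le.1 h)
      linarith
    have hb : (0 : ℝ) < B.card := by exact_mod_cast Finset.card_pos.2 ⟨u, C.mem⟩
    rw [Finset.sum_sub_distrib, Finset.sum_const, nsmul_eq_mul]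
    have := mul_pos hb hv
    linarith
  have hm₁ := hneg C₁ hle₁
  have hm₂ := hneg C₂ hle₂
  set m₁ := ∑ x ∈ B₁, (f x - f v) with hm₁d
  set m₂ := ∑ x ∈ B₂, (f x - f v) with hm₂d
  -- the coefficients on the two branches are chosen to make the test function sum to zero
  let φ : V → ℝ := fun x => (if x ∈ B₁ then m₂ else 0) + (if x ∈ B₂ then -m₁ else 0)
  let h : V → ℝ := fun x => φ x * (f x - f v)
  have hsplit : ∀ k : V → ℝ, ∑ x, φ x * k x = m₂ * ∑ x ∈ B₁, k x - m₁ * ∑ x ∈ B₂, k x := by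
    intro k
    simp only [φ, add_mul, ite_mul, zero_mul, Finset.sum_add_distrib, Finset.sum_ite_mem,
      Finset.univ_inter, neg_mul, Finset.sum_neg_distrib, Finset.mul_sum]
    ring
  have hφ₁ : ∀ x ∈ B₁, φ x = m₂ := fun x hx => by
    simp [φ, hx, Finset.disjoint_left.1 hdisj hx]
  have hφ₂ : ∀ x ∈ B₂, φ x = -m₁ := fun x hx => by
    simp [φ, hx, Finset.disjoint_right.1 hdisj hx]
  have hsum : ∑ x, h x = 0 := by
    simp only [h, hsplit]; rw [← hm₁d, ← hm₂d]; ring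
  have hdiff : ∀ {u : V} {B : Finset V} {c : ℝ}, IsCut T v u B → (∀ x ∈ B, φ x = c) →
      ∀ x ∈ B, lap T h x = c * (algConn T * f x) := by
    intro u B c C hc x hx
    rw [← hf.lap_eq x, lap, lap, Finset.mul_sum]
    refine Finset.sum_congr rfl fun y _ => ?_
    by_cases hxy : T.Adj x y
    · have : h x - h y = c * (f x - f y) := by
        by_cases hy : y ∈ B
        · simp only [h, hc x hx, hc y hy]; ring
        · obtain ⟨-, rfl⟩ := C.cross x hx y hy hxy
          simp only [h, hc x hx]; ring
      rw [this]; ring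
    · rw [adjW, if_neg hxy]; ring
  have hpt : ∀ x, h x * lap T h x = algConn T * h x ^ 2 +
      φ x * (φ x * (algConn T * f v * (f x - f v))) := by
    intro x
    by_cases hx₁ : x ∈ B₁
    · rw [hdiff C₁ hφ₁ x hx₁]; simp only [h, hφ₁ x hx₁]; ring
    by_cases hx₂ : x ∈ B₂
    · rw [hdiff C₂ hφ₂ x hx₂]; simp only [h, hφ₂ x hx₂]; ring
    have : φ x = 0 := by simp [φ, hx₁, hx₂]
    simp [h, this]
  have hR := (spectral hT.connected hcard).2 h hsum
  rw [Finset.sum_congr rfl fun x _ => hpt x, Finset.sum_add_distrib, ← Finset.mul_sum, hsplit,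
    Finset.sum_congr (s₁ := B₁) rfl fun x hx => by rw [hφ₁ x hx],
    Finset.sum_congr (s₁ := B₂) rfl fun x hx => by rw [hφ₂ x hx]] at hR
  simp only [← Finset.mul_sum] at hR
  rw [← hm₁d, ← hm₂d] at hR
  have h1 : 0 < (algConn T * f v) * (m₂ * m₁) * (-m₁ - m₂) :=
    mul_pos (mul_pos (mul_pos hα hv) (mul_pos_of_neg_of_neg hm₂ hm₁)) (by linarith)
  nlinarith

/-- If `f` vanishes at `v` and at neighbours `u₁`, `u₂`, `u₃` with `u₁` non-pendant, the equality case
of the exchange inequality spreads the zeros over the whole tree. -/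
lemma false_of_zero {v u₁ u₂ u₃ x : V} (h₁ : T.Adj v u₁) (h₂ : T.Adj v u₂) (h₃ : T.Adj v u₃)
    (h12 : u₁ ≠ u₂) (h23 : u₂ ≠ u₃) (hx : T.Adj u₁ x) (hxv : x ≠ v)
    (hv : f v = 0) (hu₁ : f u₁ = 0) (hu₂ : f u₂ = 0) (hu₃ : f u₃ = 0) : False := by
  have hx0 : f x = 0 := by
    rw [← ((swapData_child hT h₂ h₁ h12.symm hx hxv).exchange hT hmin hf).2 (by rw [hv, hu₁]), hu₂]
  have key : ∀ q (r : T.Walk q v), r.IsPath → f q = 0 := by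
    intro q r
    induction r with
    | nil => exact fun _ => hv
    | @cons q p v hqp r ih =>
      intro hr
      rw [SimpleGraph.Walk.cons_isPath_iff] at hr
      have hp := ih h₁ h₂ h₃ hxv hv hr.1
      by_cases hvp : v = p
      · subst hvp
        by_cases hq : q = u₁
        · rw [hq, hu₁]
        · rw [((swapData_child hT hqp.symm h₁ hq hx hxv).exchange hT hmin hf).2 (by rw [hv, hu₁]),
            hx0]
      · have hvb : v ∉ branch T p q := by
          intro hm
          refine (isCut_branch hT hqp.symm).notMem
            (mem_branch.2 ((mem_branch.1 hm).trans ?_))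
          rw [SimpleGraph.reachable_deleteEdges_iff_exists_walk]
          refine ⟨r.reverse, fun he => hr.2 ?_⟩
          rw [SimpleGraph.Walk.edges_reverse, List.mem_reverse] at he
          exact r.snd_mem_support_of_mem_edges he
        have C₂ := isCut_branch hT h₂
        have hdisj : Disjoint (branch T v u₂) (branch T v u₃) :=
          disjoint_branch hT h₂ h₃
            (fun hm => h23 (C₂.cross _ hm v C₂.notMem h₃.symm).1.symm) (isCut_branch hT h₃).notMem
        -- `p` lies outside one of the branches through `u₂` and `u₃`; exchange that one with the
        -- branch at `p` through `q`
        by_cases hpb : p ∈ branch T v u₂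
        · rw [← ((swapData_branch hT h₃ hqp.symm hvp (Finset.disjoint_left.1 hdisj hpb)
            hvb).exchange hT hmin hf).2 (by rw [hv, hp]), hu₃]
        · rw [← ((swapData_branch hT h₂ hqp.symm hvp hpb
            hvb).exchange hT hmin hf).2 (by rw [hv, hp]), hu₂]
  refine hf.ne_zero (funext fun q => ?_)
  obtain ⟨r, hr, -⟩ := hT.existsUnique_path q v
  exact key q r hr

omit hf in
/-- A tree of minimal algebraic connectivity has no vertex with three non-pendant neighbours. -/
lemma no_branching {v u₁ u₂ u₃ : V} (h₁ : T.Adj v u₁) (h₂ : T.Adj v u₂) (h₃ : T.Adj v u₃)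
    (h12 : u₁ ≠ u₂) (h13 : u₁ ≠ u₃) (h23 : u₂ ≠ u₃) (d₁ : 1 < T.degree u₁) (d₂ : 1 < T.degree u₂)
    (d₃ : 1 < T.degree u₃) : False := by
  have child : ∀ {u}, T.Adj v u → 1 < T.degree u → ∃ x, T.Adj u x ∧ x ≠ v := by
    intro u _ hd
    obtain ⟨x, hx, hne⟩ := Finset.exists_mem_ne hd v
    exact ⟨x, (T.mem_neighborFinset u x).1 hx, hne⟩
  obtain ⟨x₁, a₁, b₁⟩ := child h₁ d₁
  obtain ⟨x₂, a₂, b₂⟩ := child h₂ d₂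
  obtain ⟨x₃, a₃, b₃⟩ := child h₃ d₃
  have hcard : 1 < Fintype.card V := Fintype.one_lt_card_iff.2 ⟨v, u₁, h₁.ne⟩
  obtain ⟨f, hf⟩ := (spectral hT.connected hcard).1
  have inc : ∀ {f : V → ℝ}, IsFiedler T f → ∀ {u u' x x' : V}, T.Adj v u → T.Adj v u' → u ≠ u' →
      T.Adj u x → x ≠ v → T.Adj u' x' → x' ≠ v → 0 ≤ f v → f v < f u → f v < f u' → False := by
    intro f hf u u' x x' h h' hne hx hxv hx' hxv' hv hu hu'
    rcases le_total (f u') (f u) with hle | hle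
    · exact not_two_increasing hT hmin hf h h' hne hx' hxv' hv hu' hle
    · exact not_two_increasing hT hmin hf h' h hne.symm hx hxv hv hu hle
  have pos : ∀ {f : V → ℝ}, IsFiedler T f → 0 < f v → False := by
    intro f hf hv
    have n12 := not_two_nonincreasing hT hf h₁ h₂ h12 hv
    have n13 := not_two_nonincreasing hT hf h₁ h₃ h13 hv
    have n23 := not_two_nonincreasing hT hf h₂ h₃ h23 hv
    have i12 := inc hf h₁ h₂ h12 a₁ b₁ a₂ b₂ hv.le
    have i13 := inc hf h₁ h₃ h13 a₁ b₁ a₃ b₃ hv.le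
    have i23 := inc hf h₂ h₃ h23 a₂ b₂ a₃ b₃ hv.le
    rcases le_or_gt (f u₁) (f v) with c1 | c1 <;> rcases le_or_gt (f u₂) (f v) with c2 | c2 <;>
      rcases le_or_gt (f u₃) (f v) with c3 | c3 <;>
      first | exact n12 c1 c2 | exact n13 c1 c3 | exact n23 c2 c3 |
        exact i12 c1 c2 | exact i13 c1 c3 | exact i23 c2 c3
  rcases lt_trichotomy (f v) 0 with hv | hv | hv
  · exact pos hf.neg (by linarith)
  · -- two non-pendant neighbours of the same nonzero sign are impossible
    have same : ∀ {u u' x x' : V}, T.Adj v u → T.Adj v u' → u ≠ u' → T.Adj u x → x ≠ v →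
        T.Adj u' x' → x' ≠ v → f u = f u' → f u = 0 := by
      intro u u' x x' h h' hne hx hxv hx' hxv' he
      rcases lt_trichotomy (f u) 0 with hu | hu | hu
      · exact (inc hf.neg h h' hne hx hxv hx' hxv' (by linarith) (by linarith)
          (by linarith)).elim
      · exact hu
      · exact (inc hf h h' hne hx hxv hx' hxv' (by linarith) (by linarith)
          (by linarith)).elim
    -- a non-pendant neighbour with value `0` forces the other two to vanish as well
    have zero : ∀ {u u' u'' x x' x'' : V}, T.Adj v u → T.Adj v u' → T.Adj v u'' → u ≠ u' →
        u ≠ u'' → u' ≠ u'' → T.Adj u x → x ≠ v → T.Adj u' x' → x' ≠ v → T.Adj u'' x'' → x'' ≠ v →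
        f u ≠ 0 := by
      intro u u' u'' x x' x'' h h' h'' n1 n2 n3 hx hxv hx' hxv' hx'' hxv'' hu
      have e1 := ((swapData_child hT h' h n1.symm hx hxv).exchange hT hmin hf).2 (by rw [hv, hu])
      have e2 := ((swapData_child hT h'' h n2.symm hx hxv).exchange hT hmin hf).2 (by rw [hv, hu])
      have z := same h' h'' n3 hx' hxv' hx'' hxv'' (e1.trans e2.symm)
      exact false_of_zero hT hmin hf h h' h'' n1 n3 hx hxv hv hu z (by rw [e2, ← e1, z])
    have z1 := zero h₁ h₂ h₃ h12 h13 h23 a₁ b₁ a₂ b₂ a₃ b₃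
    have z2 := zero h₂ h₁ h₃ h12.symm h23 h13 a₂ b₂ a₁ b₁ a₃ b₃
    have z3 := zero h₃ h₁ h₂ h13.symm h23.symm h12 a₃ b₃ a₁ b₁ a₂ b₂
    have i12 := inc hf h₁ h₂ h12 a₁ b₁ a₂ b₂ hv.ge
    have i13 := inc hf h₁ h₃ h13 a₁ b₁ a₃ b₃ hv.ge
    have i23 := inc hf h₂ h₃ h23 a₂ b₂ a₃ b₃ hv.ge
    have j12 := inc hf.neg h₁ h₂ h12 a₁ b₁ a₂ b₂ (by linarith)
    have j13 := inc hf.neg h₁ h₃ h13 a₁ b₁ a₃ b₃ (by linarith)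
    have j23 := inc hf.neg h₂ h₃ h23 a₂ b₂ a₃ b₃ (by linarith)
    simp only [hv, neg_zero, Left.neg_pos_iff] at i12 i13 i23 j12 j13 j23
    rcases lt_or_gt_of_ne z1 with c1 | c1 <;> rcases lt_or_gt_of_ne z2 with c2 | c2 <;>
      rcases lt_or_gt_of_ne z3 with c3 | c3 <;>
      first | exact i12 c1 c2 | exact i13 c1 c3 | exact i23 c2 c3 |
        exact j12 c1 c2 | exact j13 c1 c3 | exact j23 c2 c3
  · exact pos hf hv

end Branching

/-! ### From degree conditions to a caterpillar -/

/-- A path from a list `P` of vertices to a non-pendant vertex outside `P` leaves `P` for the first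
time along an edge towards a non-pendant vertex. -/
lemma crossing {T : SimpleGraph V} (P : List V) {a b : V} (q : T.Walk a b) (hq : q.IsPath)
    (ha : a ∈ P) (hb : b ∉ P) (hbd : 1 < T.degree b) :
    ∃ y ∈ P, ∃ z, z ∉ P ∧ 1 < T.degree z ∧ T.Adj y z := by
  induction q with
  | nil => exact absurd ha hb
  | @cons a c b hac q ih =>
    rw [SimpleGraph.Walk.cons_isPath_iff] at hq
    by_cases hc : c ∈ P
    · exact ih hq.1 hc hb hbd
    · refine ⟨a, ha, c, hc, ?_, hac⟩
      cases q with
      | nil => exact hbd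
      | @cons _ d _ hcd q =>
        -- an inner vertex of a path has two distinct neighbours on it
        have hne : a ≠ d := by
          rintro rfl
          exact hq.2 (by simp)
        exact Finset.one_lt_card.2 ⟨a, (T.mem_neighborFinset c a).2 hac.symm, d,
          (T.mem_neighborFinset c d).2 hcd, hne⟩

/-- If no vertex has three non-pendant neighbours, a longest path of non-pendant vertices contains
all of them: a missing one attached at an end would extend the path, and attached elsewhere would
be a third non-pendant neighbour. -/
lemma isCaterpillar_of_no_branching {T : SimpleGraph V} (hT : T.IsTree)
    (hb : ∀ {v u₁ u₂ u₃ : V}, T.Adj v u₁ → T.Adj v u₂ → T.Adj v u₃ → u₁ ≠ u₂ → u₁ ≠ u₃ →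
      u₂ ≠ u₃ → 1 < T.degree u₁ → 1 < T.degree u₂ → 1 < T.degree u₃ → False) :
    IsCaterpillar T := by
  let good : List V → Prop := fun P => P.Nodup ∧ (∀ v ∈ P, 1 < T.degree v) ∧ P.IsChain T.Adj
  obtain ⟨P, ⟨hnd, hdeg, hch⟩, hmax⟩ : ∃ P, good P ∧ ∀ Q, good Q → Q.length ≤ P.length := by
    have hex : ∃ n, ∃ P, good P ∧ P.length = n := ⟨0, [], ⟨List.nodup_nil, by simp, by simp⟩, rfl⟩
    have hbd : ∀ n, (∃ P, good P ∧ P.length = n) → n ≤ Fintype.card V := by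
      rintro n ⟨P, hP, rfl⟩
      exact hP.1.length_le_card
    obtain ⟨P, hP, hl⟩ := Nat.findGreatest_spec (P := fun n => ∃ P, good P ∧ P.length = n)
      (hbd _ hex.choose_spec) hex.choose_spec
    refine ⟨P, hP, fun Q hQ => ?_⟩
    rw [hl]
    exact Nat.le_findGreatest (hbd _ ⟨Q, hQ, rfl⟩) ⟨Q, hQ, rfl⟩
  refine ⟨P, hnd, fun z => ⟨hdeg z, fun hz => ?_⟩, hch⟩
  by_contra hzP
  have hcons : ∀ Q, good Q → P.length < Q.length → False := fun Q hQ h =>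
    absurd (hmax Q hQ) (not_le.2 h)
  rcases P with _ | ⟨a, P'⟩
  · exact hcons [z] ⟨by simp, by simpa using hz, by simp⟩ (by simp)
  obtain ⟨q, hq, -⟩ := hT.existsUnique_path a z
  obtain ⟨y, hy, z', hz', hd, hyz⟩ := crossing (a :: P') q hq (by simp) hzP hz
  obtain ⟨l₁, l₂, hl⟩ := List.append_of_mem hy
  rw [hl] at hnd hdeg hch hz' hcons
  rcases List.eq_nil_or_concat l₁ with rfl | ⟨l₁, c, rfl⟩
  · refine hcons (z' :: y :: l₂) ⟨?_, ?_, ?_⟩ (by simp)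
    · simpa using ⟨by simpa using hz', by simpa using hnd⟩
    · intro x hx
      rcases List.mem_cons.1 hx with rfl | hx
      · exact hd
      · exact hdeg x hx
    · exact List.isChain_cons_cons.2 ⟨hyz.symm, hch⟩
  rcases l₂ with _ | ⟨d, l₂⟩
  · refine hcons (l₁.concat c ++ [y] ++ [z']) ⟨?_, ?_, ?_⟩ (by simp)
    · rw [List.nodup_append]
      refine ⟨hnd, by simp, ?_⟩
      rintro x hx _ hz rfl
      rw [List.mem_singleton] at hz
      exact hz' (hz ▸ hx)
    · intro x hx
      rcases List.mem_append.1 hx with hx | hx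
      · exact hdeg x hx
      · rw [List.mem_singleton.1 hx]; exact hd
    · rw [List.isChain_append]
      refine ⟨hch, by simp, ?_⟩
      simpa using hyz
  · have hc : T.Adj c y ∧ T.Adj y d := by
      have : (l₁ ++ ([c, y, d] ++ l₂)).IsChain T.Adj := by simpa using hch
      have := (List.isChain_append.1 (List.isChain_append.1 this).2.1).1
      simpa using this
    have hcd : c ≠ d := by
      rintro rfl
      simp [List.nodup_append] at hnd
    refine hb hc.1.symm hc.2 hyz hcd ?_ ?_ (hdeg c (by simp)) (hdeg d (by simp)) hd
    · rintro rfl; exact hz' (by simp)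
    · rintro rfl; exact hz' (by simp)

end Caterpillar

/-- a tree of minimal algebraic connectivity among all trees
with its degree sequence is a caterpillar. -/
theorem min_algConn_is_caterpillar {V : Type*} [Fintype V] [DecidableEq V]
    (T : SimpleGraph V) (hT : T.IsTree)
    (hmin : ∀ T' : SimpleGraph V, T'.IsTree → degSeq T' = degSeq T →
      algConn T ≤ algConn T') :
    IsCaterpillar T :=
  Caterpillar.isCaterpillar_of_no_branching hT
    fun h₁ h₂ h₃ h12 h13 h23 d₁ d₂ d₃ =>
      Caterpillar.no_branching hT hmin h₁ h₂ h₃ h12 h13 h23 d₁ d₂ d₃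
end
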